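/- arXiv:1807.11465 — 4 statements merged into one kernel-verified Lean document; each statement's English description precedes it below -/
import Mathlib

section
/- Let Σ = (Γ, σ) be a signed simple graph with Δ(Σ) even. If the set of vertices of Γ having degree Δ(Σ) is an independent set, then Σ admits a proper edge coloring with Δ(Σ) colors. -/
open SimpleGraph

/-- The signed color set `M_n`: for `n = 2k+1` it is `{0, ±1, …, ±k}`,
and for `n = 2k` it is `{±1, …, ±k}`. -/
def Mset (n : ℕ) : Set ℤ :=
  {a : ℤ | 2 * a.natAbs ≤ n ∧ (a = 0 → Odd n)}

/-- An `n`-edge coloring of the signed graph `(G, σ)`: an assignment of colors from `Mset n`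
to the incidences of `G` such that `γ(v,e) = -σ(e)·γ(w,e)` for each edge `e : vw`. -/
structure SColoring {V : Type*} (G : SimpleGraph V) (σ : Sym2 V → ℤ) (n : ℕ) where
  col : V → Sym2 V → ℤ
  mem_colors : ∀ ⦃v w : V⦄, G.Adj v w → col v s(v, w) ∈ Mset n
  compat : ∀ ⦃v w : V⦄, G.Adj v w → col v s(v, w) = -σ s(v, w) * col w s(v, w)

namespace SColoring

variable {V : Type*} {G : SimpleGraph V} {σ : Sym2 V → ℤ} {n : ℕ}

/-- A coloring is proper if distinct edges incident to a common vertex receive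
distinct colors at that vertex. -/
def Proper (c : SColoring G σ n) : Prop :=
  ∀ ⦃v w x : V⦄, G.Adj v w → G.Adj v x → w ≠ x → c.col v s(v, w) ≠ c.col v s(v, x)

/-- A coloring is zero-free if the color `0` is never used. -/
def ZeroFree (c : SColoring G σ n) : Prop :=
  ∀ ⦃v w : V⦄, G.Adj v w → c.col v s(v, w) ≠ 0

/-- The color `a` is absent at the vertex `v` if no edge incident to `v` is
colored `a` at `v`. -/
def Absent (c : SColoring G σ n) (a : ℤ) (v : V) : Prop :=
  ∀ ⦃w : V⦄, G.Adj v w → c.col v s(v, w) ≠ a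

end SColoring

/-! ### Dihedral orbits -/

namespace DihedralOrbit

variable {X : Type*} {A B : Equiv.Perm X}

lemma conj_zpow (hA : A * A = 1) (hB : B * B = 1) (n : ℤ) :
    B * (B * A) ^ n = (B * A) ^ (-n) * B := by
  have hA' : A⁻¹ = A := inv_eq_of_mul_eq_one_left hA
  have hB' : B⁻¹ = B := inv_eq_of_mul_eq_one_left hB
  have h : B * (B * A) * B⁻¹ = (B * A)⁻¹ := by
    rw [mul_inv_rev, hA', hB', ← mul_assoc, hB, one_mul]
  have h2 : B * (B * A) ^ n * B⁻¹ = (B * A) ^ (-n) := by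
    rw [← _root_.conj_zpow, h, inv_zpow, zpow_neg]
  rw [← h2, inv_mul_cancel_right]

lemma sameCycle_right (hA : A * A = 1) (hB : B * B = 1) {p q : X} (hp : B p = p)
    (h : (B * A).SameCycle p q) : (B * A).SameCycle p (B q) := by
  obtain ⟨n, rfl⟩ := h
  refine ⟨-n, ?_⟩
  have := congrArg (fun f : Equiv.Perm X => f p) (conj_zpow hA hB n)
  simp only [Equiv.Perm.mul_apply, hp] at this
  exact this.symm

lemma sameCycle_left (hA : A * A = 1) (hB : B * B = 1) {p q : X} (hp : B p = p)
    (h : (B * A).SameCycle p q) : (B * A).SameCycle p (A q) := by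
  have h2 : (B * A).SameCycle p ((B * A) q) := Equiv.Perm.sameCycle_apply_right.2 h
  have h3 := sameCycle_right hA hB hp h2
  have hBB : ∀ x, B (B x) = x := fun x => by
    rw [← Equiv.Perm.mul_apply, hB, Equiv.Perm.one_apply]
  simpa [Equiv.Perm.mul_apply, hBB] using h3

/-- An orbit of the group generated by two involutions contains at most two fixed points of one
of them. -/
lemma eq_of_sameCycle (hA : A * A = 1) (hB : B * B = 1) {p q r : X} (hp : B p = p)
    (hq : B q = q) (hr : B r = r) (hpq : p ≠ q) (hpr : p ≠ r)
    (h₁ : (B * A).SameCycle p q) (h₂ : (B * A).SameCycle p r) : q = r := by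
  set T := B * A with hT
  have key : ∀ n : ℤ, B ((T ^ n) p) = (T ^ n) p → (T ^ (n + n)) p = p := by
    intro n hn
    have := congrArg (fun f : Equiv.Perm X => f p) (conj_zpow hA hB n)
    simp only [Equiv.Perm.mul_apply, hp] at this
    rw [← hT, hn] at this
    rw [zpow_add, Equiv.Perm.mul_apply, this, zpow_neg, ← Equiv.Perm.mul_apply,
      mul_inv_cancel, Equiv.Perm.one_apply]
  obtain ⟨a, rfl⟩ := h₁
  obtain ⟨b, rfl⟩ := h₂
  have hdvd : ∀ n : ℤ, (MulAction.period T p : ℤ) ∣ n ↔ (T ^ n) p = p := fun n =>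
    MulAction.zpow_smul_eq_iff_period_dvd.symm
  generalize (MulAction.period T p : ℤ) = N at hdvd
  have ha := (hdvd _).2 (key a hq)
  have hb := (hdvd _).2 (key b hr)
  have ha' : ¬ N ∣ a := fun h => hpq ((hdvd a).1 h).symm
  have hb' : ¬ N ∣ b := fun h => hpr ((hdvd b).1 h).symm
  obtain ⟨s, hs⟩ := ha
  obtain ⟨t, ht⟩ := hb
  have hso : Odd s := by
    by_contra h
    obtain ⟨k, rfl⟩ := Int.not_odd_iff_even.1 h
    exact ha' ⟨k, by linarith⟩
  have hto : Odd t := by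
    by_contra h
    obtain ⟨k, rfl⟩ := Int.not_odd_iff_even.1 h
    exact hb' ⟨k, by linarith⟩
  obtain ⟨k, hk⟩ := hso.sub_odd hto
  have hab : N ∣ a - b := ⟨k, by
    have : N * s - N * t = N * (k + k) := by rw [← mul_sub, hk]
    linarith⟩
  have := (hdvd _).1 hab
  have h3 : (T ^ a) p = (T ^ b) ((T ^ (a - b)) p) := by
    rw [← Equiv.Perm.mul_apply, ← zpow_add]; congr 2; ring
  rw [h3, this]

end DihedralOrbit

/-! ### Colorings as functions on ordered pairs, and Kempe changes -/

/-- `c u w` is the color at `u` of the edge `uw`, and it vanishes off the edges of `G`;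
`τ u w` is the factor relating the colors at the two ends of `uw`. -/
structure IsSignedColoring {V : Type*} (G : SimpleGraph V) (τ : V → V → ℤ) (m : ℕ)
    (c : V → V → ℤ) : Prop where
  compat : ∀ u w, c u w = τ u w * c w u
  supp : ∀ u w, c u w ≠ 0 ↔ G.Adj u w
  bound : ∀ u w, |c u w| ≤ (m : ℤ)
  proper : ∀ u x y, c u x ≠ 0 → c u x = c u y → x = y

/-- The color `z` is available and does not occur at `u`. -/
structure Misses {V : Type*} (m : ℕ) (c : V → V → ℤ) (u : V) (z : ℤ) : Prop where
  ne_zero : z ≠ 0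
  bound : |z| ≤ (m : ℤ)
  ne : ∀ w, c u w ≠ z

/-- An odd involution of the colors `-m, …, m`. -/
structure OddInvolution (m : ℕ) where
  toFun : ℤ → ℤ
  invol : ∀ z, toFun (toFun z) = z
  odd : ∀ z, toFun (-z) = -toFun z
  bound : ∀ z, |z| ≤ (m : ℤ) → |toFun z| ≤ (m : ℤ)

namespace OddInvolution

variable {m : ℕ}

lemma injective (π : OddInvolution m) : Function.Injective π.toFun :=
  Function.Involutive.injective π.invol

lemma map_zero (π : OddInvolution m) : π.toFun 0 = 0 := by
  have := π.odd 0
  simp only [neg_zero] at this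
  omega

/-- The involution exchanging `x` with `y` and `-x` with `-y`. -/
def exchange (x y : ℤ) (hx : x ≠ 0) (hy : y ≠ 0) (hxm : |x| ≤ (m : ℤ)) (hym : |y| ≤ (m : ℤ)) :
    OddInvolution m where
  toFun z := if z = x then y else if z = y then x else if z = -x then -y else
    if z = -y then -x else z
  invol z := by grind
  odd z := by grind
  bound z hz := by
    split_ifs
    all_goals first | assumption | (rw [abs_neg]; assumption)

end OddInvolution

section Kempe

variable {V : Type*} {G : SimpleGraph V} {τ : V → V → ℤ} {m : ℕ} {c : V → V → ℤ}

lemma IsSignedColoring.symm_ne_zero (hc : IsSignedColoring G τ m c) {u w : V}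
    (h : c u w ≠ 0) : c w u ≠ 0 :=
  (hc.supp w u).2 ((hc.supp u w).1 h).symm

open Classical in
/-- Pass from a colored incidence, given by its vertex and color, to the other incidence of the
same edge. -/
noncomputable def crossEdge (c : V → V → ℤ) (p : V × ℤ) : V × ℤ :=
  if h : ∃ w, c p.1 w = p.2 ∧ p.2 ≠ 0 then (h.choose, c h.choose p.1) else p

lemma IsSignedColoring.crossEdge_apply (hc : IsSignedColoring G τ m c) {u w : V}
    (h : c u w ≠ 0) : crossEdge c (u, c u w) = (w, c w u) := by
  have hex : ∃ x, c u x = c u w ∧ c u w ≠ 0 := ⟨w, rfl, h⟩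
  have hw : w = hex.choose := hc.proper u w _ h hex.choose_spec.1.symm
  simp only [crossEdge]
  rw [dif_pos hex, ← hw]

lemma Misses.crossEdge_eq {u : V} {z : ℤ} (h : Misses m c u z) :
    crossEdge c (u, z) = (u, z) :=
  dif_neg fun ⟨w, hw, _⟩ => h.ne w hw

lemma IsSignedColoring.crossEdge_involutive (hc : IsSignedColoring G τ m c) :
    Function.Involutive (crossEdge c) := by
  rintro ⟨u, z⟩
  by_cases h : ∃ w, c u w = z ∧ z ≠ 0
  · obtain ⟨w, rfl, hz⟩ := h
    rw [hc.crossEdge_apply hz, hc.crossEdge_apply (hc.symm_ne_zero hz)]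
  · have : crossEdge c (u, z) = (u, z) := dif_neg h
    rw [this, this]

/-- The permutation of incidences given by crossing edges. -/
noncomputable def edgePerm (hc : IsSignedColoring G τ m c) : Equiv.Perm (V × ℤ) :=
  hc.crossEdge_involutive.toPerm

/-- The permutation of incidences given by exchanging colors at a vertex. -/
def colorPerm (V : Type*) (π : OddInvolution m) : Equiv.Perm (V × ℤ) :=
  Function.Involutive.toPerm (fun p => (p.1, π.toFun p.2)) fun p => by simp [π.invol]

/-- Two incidences lie on a common Kempe chain for the color exchange `π`. -/
def Linked (hc : IsSignedColoring G τ m c) (π : OddInvolution m) (p q : V × ℤ) : Prop :=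
  (edgePerm hc * colorPerm V π).SameCycle p q

/-- A set of incidences which is a union of Kempe chains for the color exchange `π`. -/
structure IsKempe (c : V → V → ℤ) (π : OddInvolution m) (K : V × ℤ → Prop) : Prop where
  color : ∀ u z, K (u, π.toFun z) ↔ K (u, z)
  edge : ∀ u w, c u w ≠ 0 → (K (u, c u w) ↔ K (w, c w u))

lemma edgePerm_mul_self (hc : IsSignedColoring G τ m c) : edgePerm hc * edgePerm hc = 1 :=
  Equiv.ext fun p => hc.crossEdge_involutive p

lemma colorPerm_mul_self (π : OddInvolution m) : colorPerm V π * colorPerm V π = 1 :=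
  Equiv.ext fun p => Prod.ext rfl (π.invol p.2)

variable {hc : IsSignedColoring G τ m c} {π : OddInvolution m}

lemma Linked.symm {p q : V × ℤ} (h : Linked hc π p q) : Linked hc π q p :=
  Equiv.Perm.SameCycle.symm h

lemma Linked.trans {p q r : V × ℤ} (h : Linked hc π p q) (h' : Linked hc π q r) :
    Linked hc π p r :=
  Equiv.Perm.SameCycle.trans h h'

lemma Linked.refl (hc : IsSignedColoring G τ m c) (π : OddInvolution m) (p : V × ℤ) :
    Linked hc π p p :=
  Equiv.Perm.SameCycle.refl _ _

/-- A Kempe chain has at most two ends. -/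
lemma Linked.not_linked {p q r : V × ℤ} (h : Linked hc π p q) (hp : Misses m c p.1 p.2)
    (hq : Misses m c q.1 q.2) (hr : Misses m c r.1 r.2) (hpq : p ≠ q) (hpr : p ≠ r)
    (hqr : q ≠ r) : ¬ Linked hc π r p := fun h' =>
  hqr (DihedralOrbit.eq_of_sameCycle (colorPerm_mul_self π) (edgePerm_mul_self hc)
    hp.crossEdge_eq hq.crossEdge_eq hr.crossEdge_eq hpq hpr h h'.symm)

lemma Misses.isKempe (hc : IsSignedColoring G τ m c) (π : OddInvolution m) {u : V} {z : ℤ}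
    (h : Misses m c u z) : IsKempe c π (Linked hc π (u, z)) where
  color x y := by
    have key : ∀ y, Linked hc π (u, z) (x, y) → Linked hc π (u, z) (x, π.toFun y) :=
      fun y hy => DihedralOrbit.sameCycle_left (colorPerm_mul_self π) (edgePerm_mul_self hc)
        h.crossEdge_eq hy
    exact ⟨fun hy => by simpa [π.invol] using key _ hy, key y⟩
  edge x y hxy := by
    have key : ∀ x y, c x y ≠ 0 → Linked hc π (u, z) (x, c x y) →
        Linked hc π (u, z) (y, c y x) := fun x y hxy hl => by
      rw [← hc.crossEdge_apply hxy]
      exact DihedralOrbit.sameCycle_right (colorPerm_mul_self π) (edgePerm_mul_self hc)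
        h.crossEdge_eq hl
    exact ⟨key x y hxy, key y x (hc.symm_ne_zero hxy)⟩

lemma IsKempe.or {K L : V × ℤ → Prop} (hK : IsKempe c π K) (hL : IsKempe c π L) :
    IsKempe c π fun p => K p ∨ L p where
  color u z := or_congr (hK.color u z) (hL.color u z)
  edge u w h := or_congr (hK.edge u w h) (hL.edge u w h)

open Classical in
/-- The effect at `u` of exchanging colors on the set `K`. -/
noncomputable def exchangeOn (π : OddInvolution m) (K : V × ℤ → Prop) (u : V) (z : ℤ) : ℤ :=
  if K (u, z) then π.toFun z else z

lemma exchangeOn_injective {K : V × ℤ → Prop} (hK : IsKempe c π K) (u : V) :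
    Function.Injective (exchangeOn π K u) := by
  intro y z h
  have h1 := hK.color u y
  have h2 := hK.color u z
  have h3 := π.invol y
  have h4 := π.invol z
  have h5 : π.toFun y = π.toFun z → y = z := fun h => π.injective h
  unfold exchangeOn at h
  split_ifs at h <;> grind

lemma exchangeOn_zero (π : OddInvolution m) (K : V × ℤ → Prop) (u : V) :
    exchangeOn π K u 0 = 0 := by
  unfold exchangeOn
  split_ifs
  exacts [π.map_zero, rfl]

lemma abs_exchangeOn_le (π : OddInvolution m) (K : V × ℤ → Prop) (u : V) {z : ℤ}
    (hz : |z| ≤ (m : ℤ)) : |exchangeOn π K u z| ≤ (m : ℤ) := by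
  unfold exchangeOn
  split_ifs
  exacts [π.bound z hz, hz]

lemma exchangeOn_ne_zero {K : V × ℤ → Prop} (hK : IsKempe c π K) (u : V) {z : ℤ} :
    exchangeOn π K u z ≠ 0 ↔ z ≠ 0 := by
  rw [← (exchangeOn_injective hK u).ne_iff (x := z), exchangeOn_zero]

/-- Exchanging colors along Kempe chains gives a coloring. -/
lemma IsSignedColoring.exchange (hc : IsSignedColoring G τ m c)
    (hτ : ∀ u w, τ u w = 1 ∨ τ u w = -1) {K : V × ℤ → Prop} (hK : IsKempe c π K) :
    IsSignedColoring G τ m fun u w => exchangeOn π K u (c u w) where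
  compat u w := by
    by_cases h : c u w = 0
    · have : c w u = 0 := by
        by_contra h'
        exact hc.symm_ne_zero h' h
      simp [h, this, exchangeOn_zero]
    · have h1 := hK.edge u w h
      have h2 := hc.compat u w
      have h3 := π.odd (c w u)
      unfold exchangeOn
      rcases hτ u w with h4 | h4 <;> rw [h4] at h2 ⊢ <;> split_ifs <;> grind
  supp u w := by rw [exchangeOn_ne_zero hK, hc.supp]
  bound u w := abs_exchangeOn_le π K u (hc.bound u w)
  proper u x y h h' :=
    hc.proper u x y ((exchangeOn_ne_zero hK u).1 h) (exchangeOn_injective hK u h')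

lemma Misses.exchange {K : V × ℤ → Prop} (hK : IsKempe c π K) {u : V} {z : ℤ}
    (h : Misses m c u z) :
    Misses m (fun u w => exchangeOn π K u (c u w)) u (exchangeOn π K u z) where
  ne_zero := (exchangeOn_ne_zero hK u).2 h.ne_zero
  bound := abs_exchangeOn_le π K u h.bound
  ne w h' := h.ne w (exchangeOn_injective hK u h')

end Kempe

/-! ### Fans -/

section Fan

variable {V : Type*} {G : SimpleGraph V} {τ : V → V → ℤ} {m : ℕ} {v : V}

/-- A fan at `v`: every edge of `G` except `v (w 0)` is colored by `c`, and for `t < n` the color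
`β t` of the edge `v (w (t + 1))` at `v` is missing at `w t`. -/
structure IsFan (G : SimpleGraph V) (τ : V → V → ℤ) (m : ℕ) (v : V) (c : V → V → ℤ)
    (w : ℕ → V) (β : ℕ → ℤ) (n : ℕ) : Prop where
  coloring : IsSignedColoring (G.deleteEdges {s(v, w 0)}) τ m c
  adj : G.Adj v (w 0)
  misses : ∀ t < n, Misses m c (w t) (β t)
  color_eq : ∀ t < n, c v (w (t + 1)) = β t
  inj : ∀ s < n, ∀ t < n, β s = β t → s = t

namespace IsFan

variable {c : V → V → ℤ} {w : ℕ → V} {β : ℕ → ℤ} {n : ℕ}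

lemma mono (h : IsFan G τ m v c w β n) {k : ℕ} (hk : k ≤ n) : IsFan G τ m v c w β k where
  coloring := h.coloring
  adj := h.adj
  misses t ht := h.misses t (ht.trans_le hk)
  color_eq t ht := h.color_eq t (ht.trans_le hk)
  inj s hs t ht := h.inj s (hs.trans_le hk) t (ht.trans_le hk)

lemma congr (h : IsFan G τ m v c w β n) {β' : ℕ → ℤ} (hβ : ∀ t < n, β' t = β t) :
    IsFan G τ m v c w β' n where
  coloring := h.coloring
  adj := h.adj
  misses t ht := by rw [hβ t ht]; exact h.misses t ht
  color_eq t ht := by rw [hβ t ht]; exact h.color_eq t ht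
  inj s hs t ht hst := h.inj s hs t ht (by rwa [← hβ s hs, ← hβ t ht])

lemma color_zero (h : IsFan G τ m v c w β n) : c v (w 0) = 0 := by
  by_contra h'
  simpa using (h.coloring.supp _ _).1 h'

lemma ne_of_lt (h : IsFan G τ m v c w β n) {s t : ℕ} (hst : s < t) (ht : t ≤ n) :
    w s ≠ w t := by
  intro heq
  obtain ⟨t, rfl⟩ := Nat.exists_eq_succ_of_ne_zero (Nat.ne_zero_of_lt hst)
  have h1 := h.color_eq t (by omega)
  have h2 := (h.misses t (by omega)).ne_zero
  rcases s with _ | s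
  · exact h2 (by rw [← h1, ← h.color_zero, heq])
  · have := h.inj s (by omega) t (by omega) (by
      rw [← h1, ← h.color_eq s (by omega)]
      exact congrArg _ heq)
    omega

lemma adj_of_le (h : IsFan G τ m v c w β n) {t : ℕ} (ht : t ≤ n) : G.Adj v (w t) := by
  rcases t with _ | t
  · exact h.adj
  · have h1 : c v (w (t + 1)) ≠ 0 := by
      rw [h.color_eq t ht]
      exact (h.misses t ht).ne_zero
    exact ((G.deleteEdges_adj).1 ((h.coloring.supp _ _).1 h1)).1

/-- Exchanging colors so that the two occurrences of each fan color change alike preserves the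
fan. -/
lemma exchange (h : IsFan G τ m v c w β n) (hτ : ∀ u w, τ u w = 1 ∨ τ u w = -1)
    {π : OddInvolution m} {K : V × ℤ → Prop} (hK : IsKempe c π K)
    (hβ : ∀ t < n, exchangeOn π K v (β t) = exchangeOn π K (w t) (β t)) :
    IsFan G τ m v (fun u x => exchangeOn π K u (c u x)) w
      (fun t => exchangeOn π K v (β t)) n where
  coloring := h.coloring.exchange hτ hK
  adj := h.adj
  misses t ht := by
    rw [hβ t ht]
    exact (h.misses t ht).exchange hK
  color_eq t ht := by simp only [h.color_eq t ht]
  inj s hs t ht hst := h.inj s hs t ht (exchangeOn_injective hK v hst)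

open Classical in
/-- Change the color of the edge `vx` to `z` (at both ends). -/
noncomputable def recolor (c : V → V → ℤ) (v x : V) (z : ℤ) (a b : V) : ℤ :=
  if (a = v ∧ b = x) ∨ (a = x ∧ b = v) then z else c a b

/-- Color the uncolored edge with a color missing at both ends. -/
lemma isSignedColoring_recolor {x : V} {z : ℤ}
    (hc : IsSignedColoring (G.deleteEdges {s(v, x)}) τ m c) (hx : G.Adj v x)
    (hτv : ∀ x, G.Adj v x → τ v x = 1 ∧ τ x v = 1)
    (hv : Misses m c v z) (hxz : Misses m c x z) :
    IsSignedColoring G τ m (recolor c v x z) where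
  compat a b := by
    have := hc.compat a b
    have := hτv x hx
    unfold recolor
    grind
  supp a b := by
    have h1 := hc.supp a b
    have h2 := hv.ne_zero
    have h3 := hx.symm
    rw [SimpleGraph.deleteEdges_adj] at h1
    simp only [Set.mem_singleton_iff, Sym2.eq_iff] at h1
    unfold recolor
    split_ifs <;> grind
  bound a b := by
    unfold recolor
    split_ifs
    exacts [hv.bound, hc.bound a b]
  proper a b d h h' := by
    have h1 := hc.proper a b d
    have h2 := hv.ne
    have h3 := hxz.ne
    unfold recolor at h h'
    split_ifs at h h' <;> grind

/-- Uncolor an edge. -/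
lemma isSignedColoring_uncolor {x : V} (hc : IsSignedColoring G τ m c) :
    IsSignedColoring (G.deleteEdges {s(v, x)}) τ m (recolor c v x 0) where
  compat a b := by
    have := hc.compat a b
    unfold recolor
    grind
  supp a b := by
    have h1 := hc.supp a b
    rw [SimpleGraph.deleteEdges_adj]
    simp only [Set.mem_singleton_iff, Sym2.eq_iff]
    unfold recolor
    split_ifs <;> grind
  bound a b := by
    unfold recolor
    split_ifs
    exacts [by simp, hc.bound a b]
  proper a b d h h' := by
    have h1 := hc.proper a b d
    unfold recolor at h h'
    split_ifs at h h' <;> grind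

lemma misses_recolor {x : V} {y z : ℤ} {u : V} (h : Misses m c u z) (hu : u ≠ v ∧ u ≠ x ∨ z ≠ y) :
    Misses m (recolor c v x y) u z where
  ne_zero := h.ne_zero
  bound := h.bound
  ne a := by
    have := h.ne a
    unfold recolor
    grind

/-- Shift the uncolored edge by one step along the fan. -/
lemma rotate (h : IsFan G τ m v c w β (n + 1))
    (hτv : ∀ x, G.Adj v x → τ v x = 1 ∧ τ x v = 1) :
    ∃ c', IsFan G τ m v c' (fun t => w (t + 1)) (fun t => β (t + 1)) n ∧
      (∀ z, Misses m c v z → Misses m c' v z) ∧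
      (∀ z t, 0 < t → t ≤ n + 1 → Misses m c (w t) z → Misses m c' (w t) z) ∧
      Misses m c' (w 1) (β 0) := by
  have hm0 := h.misses 0 (by omega)
  have hc0 : c v (w 1) = β 0 := h.color_eq 0 (by omega)
  have ha1 : G.Adj v (w 1) := h.adj_of_le (by omega)
  have h01 : w 0 ≠ w 1 := h.ne_of_lt (by omega) (by omega)
  have hc1 : c (w 1) v = β 0 := by
    rw [← hc0, h.coloring.compat, (hτv _ ha1).2, one_mul]
  set c₁ := recolor c v (w 1) 0 with hc₁
  have hcol₁ : IsSignedColoring ((G.deleteEdges {s(v, w 1)}).deleteEdges {s(v, w 0)}) τ m c₁ := by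
    have := isSignedColoring_uncolor (v := v) (x := w 1) h.coloring
    rwa [SimpleGraph.deleteEdges_deleteEdges, Set.union_comm,
      ← SimpleGraph.deleteEdges_deleteEdges] at this
  have hv₁ : Misses m c₁ v (β 0) := ⟨hm0.ne_zero, hm0.bound, fun a => by
    have h1 := h.coloring.proper v (w 1) a
    have h2 := hm0.ne_zero
    simp only [hc₁, recolor]
    grind⟩
  have hw₁ : Misses m c₁ (w 1) (β 0) := ⟨hm0.ne_zero, hm0.bound, fun a => by
    have h1 := h.coloring.proper (w 1) v a
    have h2 := hm0.ne_zero
    simp only [hc₁, recolor]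
    grind⟩
  have hm₁ : ∀ u z, Misses m c u z → Misses m c₁ u z := fun u z hz =>
    misses_recolor hz (Or.inr hz.ne_zero)
  have hτv' : ∀ x, (G.deleteEdges {s(v, w 1)}).Adj v x → τ v x = 1 ∧ τ x v = 1 := fun x hx =>
    hτv x ((G.deleteEdges_adj).1 hx).1
  have hadj0 : (G.deleteEdges {s(v, w 1)}).Adj v (w 0) := by
    rw [SimpleGraph.deleteEdges_adj]
    refine ⟨h.adj, ?_⟩
    have := ha1.ne
    simp only [Set.mem_singleton_iff, Sym2.eq_iff]
    grind
  have hmv : ∀ z, Misses m c v z → Misses m (recolor c₁ v (w 0) (β 0)) v z := fun z hz =>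
    misses_recolor (hm₁ v z hz) (Or.inr fun hzb => hz.ne (w 1) (by rw [hc0, hzb]))
  have hmw : ∀ z t, 0 < t → t ≤ n + 1 → Misses m c₁ (w t) z →
      Misses m (recolor c₁ v (w 0) (β 0)) (w t) z := fun z t ht htn hz =>
    misses_recolor hz (Or.inl ⟨(h.adj_of_le htn).ne', (h.ne_of_lt ht htn).symm⟩)
  refine ⟨recolor c₁ v (w 0) (β 0), ⟨?_, ha1, ?_, ?_, ?_⟩, hmv,
    fun z t ht htn hz => hmw z t ht htn (hm₁ _ _ hz), hmw _ 1 (by omega) (by omega) hw₁⟩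
  · exact isSignedColoring_recolor hcol₁ hadj0 hτv' hv₁ (hm₁ _ _ hm0)
  · exact fun t ht => hmw _ _ (by omega) (by omega) (hm₁ _ _ (h.misses (t + 1) (by omega)))
  · intro t ht
    have h1 := h.color_eq (t + 1) (by omega)
    have h2 := h.ne_of_lt (s := 0) (t := t + 1 + 1) (by omega) (by omega)
    have h3 := h.ne_of_lt (s := 1) (t := t + 1 + 1) (by omega) (by omega)
    have h4 := (h.adj_of_le (t := t + 1 + 1) (by omega)).ne
    have h5 := h.adj.ne
    simp only [hc₁, recolor]
    grind
  · intro s hs t ht hst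
    have := h.inj (s + 1) (by omega) (t + 1) (by omega) hst
    omega

/-- Shift the uncolored edge to the end of the fan. -/
lemma exists_shift (h : IsFan G τ m v c w β n)
    (hτv : ∀ x, G.Adj v x → τ v x = 1 ∧ τ x v = 1) :
    ∃ c', IsSignedColoring (G.deleteEdges {s(v, w n)}) τ m c' ∧
      (∀ z, Misses m c v z → Misses m c' v z) ∧
      (∀ z, Misses m c (w n) z → Misses m c' (w n) z) ∧
      ∀ k, n = k + 1 → Misses m c' (w n) (β k) := by
  induction n generalizing c w β with
  | zero => exact ⟨c, h.coloring, fun _ => id, fun _ => id, fun k hk => by omega⟩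
  | succ n ih =>
    obtain ⟨c₁, h₁, hv, hw, hw1⟩ := h.rotate hτv
    obtain ⟨c₂, h₂, hv₂, hw₂, hk⟩ := ih h₁
    refine ⟨c₂, h₂, fun z hz => hv₂ z (hv z hz),
      fun z hz => hw₂ z (hw z (n + 1) (by omega) le_rfl hz), ?_⟩
    rintro k hk'
    obtain rfl : n = k := by omega
    rcases n with _ | n
    · exact hw₂ _ hw1
    · exact hk n rfl

/-- If a color is missing at both the center and the end of a fan, then `G` is colorable. -/
lemma exists_coloring (h : IsFan G τ m v c w β n)
    (hτv : ∀ x, G.Adj v x → τ v x = 1 ∧ τ x v = 1) {z : ℤ}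
    (hv : Misses m c v z) (hw : Misses m c (w n) z) : ∃ c', IsSignedColoring G τ m c' := by
  obtain ⟨c', hc', hv', hw', -⟩ := h.exists_shift hτv
  exact ⟨_, isSignedColoring_recolor hc' (h.adj_of_le le_rfl) hτv (hv' z hv) (hw' z hw)⟩

/-- The exchange of two missing colors. -/
def exch {u u' : V} {x y : ℤ} (hx : Misses m c u x) (hy : Misses m c u' y) : OddInvolution m :=
  OddInvolution.exchange x y hx.ne_zero hy.ne_zero hx.bound hy.bound

section exch

variable {u u' : V} {x y z : ℤ} (hx : Misses m c u x) (hy : Misses m c u' y)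

lemma exch_left : (exch hx hy).toFun x = y := by
  simp only [exch, OddInvolution.exchange]; grind

lemma exch_right : (exch hx hy).toFun y = x := by
  simp only [exch, OddInvolution.exchange]; grind

lemma exch_neg_right : (exch hx hy).toFun (-y) = -x := by
  rw [(exch hx hy).odd, exch_right]

lemma exch_of_ne (h₁ : z ≠ x) (h₂ : z ≠ -x) (h₃ : z ≠ y) (h₄ : z ≠ -y) :
    (exch hx hy).toFun z = z := by
  simp only [exch, OddInvolution.exchange]; grind

end exch

lemma exchangeOn_of_mem {π : OddInvolution m} {K : V × ℤ → Prop} {u : V} {z : ℤ}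
    (h : K (u, z)) : exchangeOn π K u z = π.toFun z :=
  if_pos h

lemma exchangeOn_of_not_mem {π : OddInvolution m} {K : V × ℤ → Prop} {u : V} {z : ℤ}
    (h : ¬ K (u, z)) : exchangeOn π K u z = z :=
  if_neg h

lemma exchangeOn_of_fixed {π : OddInvolution m} {K : V × ℤ → Prop} {u : V} {z : ℤ}
    (h : π.toFun z = z) : exchangeOn π K u z = z := by
  unfold exchangeOn
  split_ifs
  exacts [h, rfl]

/-- In an uncolorable graph no exchange makes a color missing at both ends of a fan. -/
lemma exchangeOn_ne (h : IsFan G τ m v c w β n) (hτ : ∀ u w, τ u w = 1 ∨ τ u w = -1)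
    (hτv : ∀ x, G.Adj v x → τ v x = 1 ∧ τ x v = 1) (hno : ¬ ∃ c', IsSignedColoring G τ m c')
    {π : OddInvolution m} {K : V × ℤ → Prop} (hK : IsKempe c π K)
    (hβ : ∀ t < n, exchangeOn π K v (β t) = exchangeOn π K (w t) (β t)) {a b : ℤ}
    (ha : Misses m c v a) (hb : Misses m c (w n) b) :
    exchangeOn π K v a ≠ exchangeOn π K (w n) b := fun hab =>
  hno ((h.exchange hτ hK hβ).exists_coloring hτv (ha.exchange hK) (hab ▸ hb.exchange hK))

variable {α γ : ℤ}

/-- In an uncolorable graph, the chain at the end of a fan leads to the center, unless it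
disturbs the fan. -/
lemma linked_of_stable (h : IsFan G τ m v c w β n) (hτ : ∀ u w, τ u w = 1 ∨ τ u w = -1)
    (hτv : ∀ x, G.Adj v x → τ v x = 1 ∧ τ x v = 1) (hno : ¬ ∃ c', IsSignedColoring G τ m c')
    (hα : Misses m c v α) (hγ : Misses m c (w n) γ)
    (hβ : ∀ t < n, (β t ≠ α ∧ β t ≠ -α ∧ β t ≠ γ ∧ β t ≠ -γ) ∨
      (¬ Linked h.coloring (exch hα hγ) (w n, γ) (v, β t) ∧
        ¬ Linked h.coloring (exch hα hγ) (w n, γ) (w t, β t))) :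
    Linked h.coloring (exch hα hγ) (w n, γ) (v, α) := by
  by_contra hnot
  refine h.exchangeOn_ne hτ hτv hno (hγ.isKempe h.coloring (exch hα hγ)) ?_ hα hγ ?_
  · intro t ht
    rcases hβ t ht with ⟨h1, h2, h3, h4⟩ | ⟨h1, h2⟩
    · have := exch_of_ne hα hγ h1 h2 h3 h4
      rw [exchangeOn_of_fixed this, exchangeOn_of_fixed this]
    · rw [exchangeOn_of_not_mem h1, exchangeOn_of_not_mem h2]
  · rw [exchangeOn_of_not_mem hnot, exchangeOn_of_mem (Linked.refl _ _ _), exch_right]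

lemma linked_of_ne (h : IsFan G τ m v c w β n) (hτ : ∀ u w, τ u w = 1 ∨ τ u w = -1)
    (hτv : ∀ x, G.Adj v x → τ v x = 1 ∧ τ x v = 1) (hno : ¬ ∃ c', IsSignedColoring G τ m c')
    (hα : Misses m c v α) (hγ : Misses m c (w n) γ)
    (hβ : ∀ t < n, β t ≠ α ∧ β t ≠ -α ∧ β t ≠ γ ∧ β t ≠ -γ) :
    Linked h.coloring (exch hα hγ) (w n, γ) (v, α) :=
  h.linked_of_stable hτ hτv hno hα hγ fun t ht => Or.inl (hβ t ht)

lemma pair_ne_of_le (h : IsFan G τ m v c w β n) {t : ℕ} (ht : t ≤ n) (y z : ℤ) :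
    (v, y) ≠ (w t, z) := fun heq =>
  (h.adj_of_le ht).ne (Prod.ext_iff.1 heq).1

lemma pair_ne_of_lt (h : IsFan G τ m v c w β n) {s t : ℕ} (hst : s < t) (ht : t ≤ n) (y z : ℤ) :
    (w s, y) ≠ (w t, z) := fun heq =>
  h.ne_of_lt hst ht (Prod.ext_iff.1 heq).1

/-- If `-α` is missing at both ends of a fan avoiding `±α` whose center misses `α`, then the graph
is colorable. -/
lemma false_of_neg_misses_ends (h : IsFan G τ m v c w β n)
    (hτ : ∀ u w, τ u w = 1 ∨ τ u w = -1)
    (hτv : ∀ x, G.Adj v x → τ v x = 1 ∧ τ x v = 1) (hno : ¬ ∃ c', IsSignedColoring G τ m c')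
    (hn : 0 < n) (hα : Misses m c v α) (h0 : Misses m c (w 0) (-α)) (hγ : Misses m c (w n) (-α))
    (hβ : ∀ t < n, β t ≠ α ∧ β t ≠ -α) : False := by
  have l0 := (h.mono hn.le).linked_of_ne hτ hτv hno hα h0 (fun t ht => by omega)
  have ln := h.linked_of_ne hτ hτv hno hα hγ (fun t ht => by
    have := hβ t ht
    simp only [neg_neg]
    tauto)
  exact l0.symm.not_linked hα h0 hγ (h.pair_ne_of_le hn.le _ _) (h.pair_ne_of_le le_rfl _ _)
    (h.pair_ne_of_lt hn le_rfl _ _) ln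

lemma false_of_neg_misses_twice (h : IsFan G τ m v c w β n)
    (hτ : ∀ u w, τ u w = 1 ∨ τ u w = -1)
    (hτv : ∀ x, G.Adj v x → τ v x = 1 ∧ τ x v = 1) (hno : ¬ ∃ c', IsSignedColoring G τ m c')
    {j : ℕ} (hj : j < n) (hα : Misses m c v α) (hjα : β j = -α)
    (hγ : Misses m c (w n) (-α)) (hβ : ∀ t < n, t ≠ j → β t ≠ α ∧ β t ≠ -α) : False := by
  have hwj : Misses m c (w j) (-α) := hjα ▸ h.misses j hj
  have lj := (h.mono hj.le).linked_of_ne hτ hτv hno hα hwj (fun t ht => by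
    have := hβ t (by omega) (by omega)
    simp only [neg_neg]
    tauto)
  have hnv : ¬ Linked h.coloring (exch hα hγ) (w n, -α) (v, α) :=
    lj.symm.not_linked hα hwj hγ (h.pair_ne_of_le hj.le _ _) (h.pair_ne_of_le le_rfl _ _)
      (h.pair_ne_of_lt hj le_rfl _ _)
  refine hnv (h.linked_of_stable hτ hτv hno hα hγ fun t ht => ?_)
  by_cases htj : t = j
  · subst htj
    rw [hjα]
    refine Or.inr ⟨fun hl => hnv ?_, fun hl => hnv (hl.trans lj)⟩
    rw [← ((hγ.isKempe h.coloring (exch hα hγ)).color v α), exch_left]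
    exact hl
  · have := hβ t ht htj
    simp only [neg_neg]
    tauto

/-- If the ends `w p` and `w q` of two fans miss opposite colors, then the color missing at `w q`
can be turned into `-α`. -/
lemma exists_exchange_neg {q p : ℕ} (h : IsFan G τ m v c w β q)
    (hτ : ∀ u w, τ u w = 1 ∨ τ u w = -1)
    (hτv : ∀ x, G.Adj v x → τ v x = 1 ∧ τ x v = 1) (hno : ¬ ∃ c', IsSignedColoring G τ m c')
    (hα : Misses m c v α) (hpq : p < q) (hp : Misses m c (w p) (β p))
    (hq : Misses m c (w q) (-β p)) (hβ : ∀ t < q, β t ≠ α ∧ β t ≠ -α)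
    (hβp : ∀ t < q, β t ≠ -β p) :
    ∃ c', IsFan G τ m v c' w β q ∧ Misses m c' v α ∧ Misses m c' (w q) (-α) ∧
      ∀ u, Misses m c u (-α) → ¬ Linked h.coloring (exch hα hp) (w q, -β p) (u, -α) →
        Misses m c' u (-α) := by
  have lp := (h.mono hpq.le).linked_of_ne hτ hτv hno hα hp (fun t ht => by
    have h1 := hβ t (by omega)
    have h2 := hβp t (by omega)
    have h3 := h.inj t (by omega) p hpq
    refine ⟨h1.1, h1.2, fun h4 => ?_, h2⟩
    have := h3 h4
    omega)
  have nv : ¬ Linked h.coloring (exch hα hp) (w q, -β p) (v, α) :=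
    lp.symm.not_linked hα hp hq (h.pair_ne_of_le hpq.le _ _) (h.pair_ne_of_le le_rfl _ _)
      (h.pair_ne_of_lt hpq le_rfl _ _)
  have np : ¬ Linked h.coloring (exch hα hp) (w q, -β p) (w p, β p) := fun hl => nv (hl.trans lp)
  have hK := hq.isKempe h.coloring (exch hα hp)
  have nvp : ¬ Linked h.coloring (exch hα hp) (w q, -β p) (v, β p) := fun hl => nv (by
    rw [← hK.color v α, exch_left]
    exact hl)
  set K := Linked h.coloring (exch hα hp) (w q, -β p) with hKdef
  have hfix : ∀ t < q, exchangeOn (exch hα hp) K v (β t) = β t ∧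
      exchangeOn (exch hα hp) K (w t) (β t) = β t := by
    intro t ht
    by_cases htp : t = p
    · subst htp
      exact ⟨exchangeOn_of_not_mem nvp, exchangeOn_of_not_mem np⟩
    · have := exch_of_ne hα hp (hβ t ht).1 (hβ t ht).2 (fun h4 => htp (h.inj t ht p hpq h4))
        (hβp t ht)
      exact ⟨exchangeOn_of_fixed this, exchangeOn_of_fixed this⟩
  refine ⟨_, (h.exchange hτ hK fun t ht => (hfix t ht).1.trans (hfix t ht).2.symm).congr
    fun t ht => (hfix t ht).1.symm, ?_, ?_, fun u hu hnu => ?_⟩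
  · have := hα.exchange hK
    rwa [exchangeOn_of_not_mem nv] at this
  · have := hq.exchange hK
    rwa [exchangeOn_of_mem (Linked.refl _ _ _), exch_neg_right] at this
  · have := hu.exchange hK
    rwa [exchangeOn_of_not_mem hnu] at this

lemma false_of_repeat_of_ne_neg (h : IsFan G τ m v c w β n)
    (hτ : ∀ u w, τ u w = 1 ∨ τ u w = -1)
    (hτv : ∀ x, G.Adj v x → τ v x = 1 ∧ τ x v = 1) (hno : ¬ ∃ c', IsSignedColoring G τ m c')
    (hα : Misses m c v α) {j : ℕ} (hj : j < n) (hγ : Misses m c (w n) (β j))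
    (hβ : ∀ t < n, β t ≠ α ∧ β t ≠ -α) (hβj : ∀ t < n, β t ≠ -β j) : False := by
  have hwj := h.misses j hj
  have hne : ∀ t < n, t ≠ j → β t ≠ α ∧ β t ≠ -α ∧ β t ≠ β j ∧ β t ≠ -β j := fun t ht htj =>
    ⟨(hβ t ht).1, (hβ t ht).2, fun h4 => htj (h.inj t ht j hj h4), hβj t ht⟩
  have lj := (h.mono hj.le).linked_of_ne hτ hτv hno hα hwj
    (fun t ht => hne t (by omega) (by omega))
  have hnv : ¬ Linked h.coloring (exch hα hγ) (w n, β j) (v, α) :=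
    lj.symm.not_linked hα hwj hγ (h.pair_ne_of_le hj.le _ _) (h.pair_ne_of_le le_rfl _ _)
      (h.pair_ne_of_lt hj le_rfl _ _)
  refine hnv (h.linked_of_stable hτ hτv hno hα hγ fun t ht => ?_)
  by_cases htj : t = j
  · subst htj
    refine Or.inr ⟨fun hl => hnv ?_, fun hl => hnv (hl.trans lj)⟩
    rw [← ((hγ.isKempe h.coloring (exch hα hγ)).color v α), exch_left]
    exact hl
  · exact Or.inl (hne t ht htj)

/-- If moreover `w 0` misses `-α`, then the chain at `w q` ends at `w 0`. -/
lemma linked_zero {q p : ℕ} (h : IsFan G τ m v c w β q)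
    (hτ : ∀ u w, τ u w = 1 ∨ τ u w = -1)
    (hτv : ∀ x, G.Adj v x → τ v x = 1 ∧ τ x v = 1) (hno : ¬ ∃ c', IsSignedColoring G τ m c')
    (hα : Misses m c v α) (h0 : Misses m c (w 0) (-α)) (hpq : p < q)
    (hp : Misses m c (w p) (β p)) (hq : Misses m c (w q) (-β p))
    (hβ : ∀ t < q, β t ≠ α ∧ β t ≠ -α) (hβp : ∀ t < q, β t ≠ -β p) :
    Linked h.coloring (exch hα hp) (w q, -β p) (w 0, -α) := by
  by_contra hnot
  obtain ⟨c', h', hα', hq', hu⟩ := h.exists_exchange_neg hτ hτv hno hα hpq hp hq hβ hβp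
  exact h'.false_of_neg_misses_ends hτ hτv hno (by omega) hα' (hu _ h0 hnot) hq' hβ

/-- A fan in an uncolorable graph whose center misses `α` and whose first vertex misses `-α` has no
repeated missing color. -/
lemma false_of_repeat (h : IsFan G τ m v c w β n)
    (hτ : ∀ u w, τ u w = 1 ∨ τ u w = -1)
    (hτv : ∀ x, G.Adj v x → τ v x = 1 ∧ τ x v = 1) (hno : ¬ ∃ c', IsSignedColoring G τ m c')
    (hα : Misses m c v α) (h0 : Misses m c (w 0) (-α)) {j : ℕ} (hj : j < n)
    (hγ : Misses m c (w n) (β j)) (hβ : ∀ t < n, β t ≠ α ∧ β t ≠ -α) : False := by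
  by_cases hex : ∃ l < n, β l = -β j
  swap
  · push Not at hex
    exact h.false_of_repeat_of_ne_neg hτ hτv hno hα hj hγ hβ hex
  obtain ⟨l, hl, hlj⟩ := hex
  have hwj := h.misses j hj
  have hwl := h.misses l hl
  have hne : l ≠ j := by
    rintro rfl
    have := hwl.ne_zero
    omega
  -- The first of `j` and `l` is `p`, the second one is `q`.
  obtain ⟨p, q, hpq, hqn, hqp, hor⟩ : ∃ p q, p < q ∧ q < n ∧ β q = -β p ∧
      ((l = p ∧ j = q) ∨ (j = p ∧ l = q)) := by
    rcases lt_or_gt_of_ne hne with hlt | hlt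
    · exact ⟨l, j, hlt, hj, by rw [hlj, neg_neg], Or.inl ⟨rfl, rfl⟩⟩
    · exact ⟨j, l, hlt, hl, hlj, Or.inr ⟨rfl, rfl⟩⟩
  have hp := h.misses p (hpq.trans hqn)
  have hq : Misses m c (w q) (-β p) := hqp ▸ h.misses q hqn
  have hneq : ∀ t < n, t ≠ q → β t ≠ -β p := fun t ht htq h4 =>
    htq (h.inj t ht q hqn (h4.trans hqp.symm))
  have hnep : ∀ t < n, t ≠ p → β t ≠ β p := fun t ht htp h4 =>
    htp (h.inj t ht p (hpq.trans hqn) h4)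
  set π := exch hα hp with hπ
  have lp : Linked h.coloring π (w p, β p) (v, α) :=
    (h.mono (hpq.trans hqn).le).linked_of_ne hτ hτv hno hα hp fun t ht =>
      ⟨(hβ t (by omega)).1, (hβ t (by omega)).2, hnep t (by omega) (by omega),
        hneq t (by omega) (by omega)⟩
  have lq : Linked h.coloring π (w q, -β p) (w 0, -α) :=
    (h.mono hqn.le).linked_zero hτ hτv hno hα h0 hpq hp hq (fun t ht => hβ t (by omega))
      fun t ht => hneq t (by omega) (by omega)
  -- Neither chain meets the chain at the end of the fan.
  have nLv : ¬ Linked h.coloring π (w n, β j) (v, α) :=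
    lp.symm.not_linked hα hp hγ (h.pair_ne_of_le (by omega) _ _) (h.pair_ne_of_le le_rfl _ _)
      (h.pair_ne_of_lt (by omega) le_rfl _ _)
  have nLp : ¬ Linked h.coloring π (w n, β j) (w p, β p) := fun hl => nLv (hl.trans lp)
  have nLq : ¬ Linked h.coloring π (w n, β j) (w q, -β p) :=
    lq.not_linked hq h0 hγ (h.pair_ne_of_lt (by omega) (by omega) _ _).symm
      (h.pair_ne_of_lt hqn le_rfl _ _) (h.pair_ne_of_lt (by omega) le_rfl _ _)
  have nL0 : ¬ Linked h.coloring π (w n, β j) (w 0, -α) := fun hl => nLq (hl.trans lq.symm)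
  have nKv : ¬ Linked h.coloring π (w q, -β p) (v, α) :=
    lp.symm.not_linked hα hp hq (h.pair_ne_of_le (by omega) _ _) (h.pair_ne_of_le hqn.le _ _)
      (h.pair_ne_of_lt hpq hqn.le _ _)
  have nKp : ¬ Linked h.coloring π (w q, -β p) (w p, β p) := fun hl => nKv (hl.trans lp)
  have hL := hγ.isKempe h.coloring π
  have hK := hq.isKempe h.coloring π
  have nLvp : ¬ Linked h.coloring π (w n, β j) (v, β p) := fun hl => nLv (by
    rw [← hL.color v α, hπ, exch_left]
    exact hl)
  have nKvp : ¬ Linked h.coloring π (w q, -β p) (v, β p) := fun hl => nKv (by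
    rw [← hK.color v α, hπ, exch_left]
    exact hl)
  have hfix : ∀ t < n, t ≠ p → t ≠ q → π.toFun (β t) = β t := fun t ht htp htq =>
    exch_of_ne hα hp (hβ t ht).1 (hβ t ht).2 (hnep t ht htp) (hneq t ht htq)
  -- Exchange on the chain at the end of the fan, together with the one at `w q` if necessary.
  obtain ⟨J, hJ, hJv, hJp, hJvp, hJn, hJq⟩ : ∃ J : V × ℤ → Prop, IsKempe c π J ∧ ¬ J (v, α) ∧
      ¬ J (w p, β p) ∧ ¬ J (v, β p) ∧ J (w n, β j) ∧
      ((J (v, -β p) ∧ J (w q, -β p)) ∨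
        (¬ J (v, -β p) ∧ ¬ J (w q, -β p) ∧ ¬ J (w 0, -α))) := by
    by_cases hLq : Linked h.coloring π (w n, β j) (v, -β p)
    · exact ⟨_, hL.or hK, not_or.2 ⟨nLv, nKv⟩, not_or.2 ⟨nLp, nKp⟩, not_or.2 ⟨nLvp, nKvp⟩,
        Or.inl (Linked.refl _ _ _), Or.inl ⟨Or.inl hLq, Or.inr (Linked.refl _ _ _)⟩⟩
    · exact ⟨_, hL, nLv, nLp, nLvp, Linked.refl _ _ _, Or.inr ⟨hLq, nLq, nL0⟩⟩
  have hst : ∀ t < n, exchangeOn π J v (β t) = exchangeOn π J (w t) (β t) := by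
    intro t ht
    by_cases htp : t = p
    · subst htp
      rw [exchangeOn_of_not_mem hJvp, exchangeOn_of_not_mem hJp]
    by_cases htq : t = q
    · subst htq
      rw [hqp]
      rcases hJq with ⟨h1, h2⟩ | ⟨h1, h2, -⟩
      · rw [exchangeOn_of_mem h1, exchangeOn_of_mem h2]
      · rw [exchangeOn_of_not_mem h1, exchangeOn_of_not_mem h2]
    rw [exchangeOn_of_fixed (hfix t ht htp htq), exchangeOn_of_fixed (hfix t ht htp htq)]
  have hα' := hα.exchange hJ
  rw [exchangeOn_of_not_mem hJv] at hα'
  rcases hor with ⟨rfl, rfl⟩ | ⟨rfl, rfl⟩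
  · have h' := h.exchange hτ hJ hst
    have hγ' := hγ.exchange hJ
    rw [exchangeOn_of_mem hJn, hqp, hπ, exch_neg_right] at hγ'
    have hβ' : ∀ t < n, t ≠ j → exchangeOn π J v (β t) = β t := fun t ht htj => by
      by_cases htl : t = l
      · subst htl
        exact exchangeOn_of_not_mem hJvp
      · exact exchangeOn_of_fixed (hfix t ht htl htj)
    rcases hJq with ⟨h1, h2⟩ | ⟨h1, h2, h3⟩
    · refine h'.false_of_neg_misses_twice hτ hτv hno hj hα' ?_ hγ' ?_
      · rw [hqp, exchangeOn_of_mem h1, hπ, exch_neg_right]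
      · intro t ht htj
        rw [hβ' t ht htj]
        exact hβ t ht
    · have h0' := h0.exchange hJ
      rw [exchangeOn_of_not_mem h3] at h0'
      refine h'.false_of_neg_misses_ends hτ hτv hno (by omega) hα' h0' hγ' fun t ht => ?_
      by_cases htj : t = j
      · subst htj
        rw [hqp, exchangeOn_of_not_mem h1, ← hqp]
        exact hβ t ht
      · rw [hβ' t ht htj]
        exact hβ t ht
  · refine h.exchangeOn_ne hτ hτv hno hJ hst hα hγ ?_
    rw [exchangeOn_of_not_mem hJv, exchangeOn_of_mem hJn, hπ, exch_right]

/-- Following missing colors from an uncolored edge, one reaches a repeated color. -/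
lemma exists_repeat {x₀ : V} (hτv : ∀ x, G.Adj v x → τ v x = 1 ∧ τ x v = 1)
    (hno : ¬ ∃ c', IsSignedColoring G τ m c')
    (hc : IsSignedColoring (G.deleteEdges {s(v, x₀)}) τ m c) (hx₀ : G.Adj v x₀)
    (f : V → ℤ) (hf : ∀ x, G.Adj v x → Misses m c x (f x)) :
    ∃ (w : ℕ → V) (n j : ℕ), IsFan G τ m v c w (fun t => f (w t)) n ∧ w 0 = x₀ ∧ j < n ∧
      Misses m c (w n) (f (w j)) := by
  classical
  let g : V → V := fun x => if h : ∃ y, c v y = f x then h.choose else x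
  have hg : ∀ x, (∃ y, c v y = f x) → c v (g x) = f x := fun x hx => by
    simp only [g, dif_pos hx]
    exact hx.choose_spec
  let w : ℕ → V := fun t => g^[t] x₀
  have hws : ∀ t, w (t + 1) = g (w t) := fun t => Function.iterate_succ_apply' g t x₀
  have hfan : ∀ n, (∀ s < n, ∀ t < n, f (w s) = f (w t) → s = t) →
      IsFan G τ m v c w (fun t => f (w t)) n := by
    intro n
    induction n with
    | zero =>
      exact fun _ => ⟨hc, hx₀, fun t ht => by omega, fun t ht => by omega, fun t ht => by omega⟩
    | succ n ih =>
      intro hinj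
      have h := ih fun s hs t ht => hinj s (by omega) t (by omega)
      have hm := hf (w n) (h.adj_of_le le_rfl)
      have hex : ∃ y, c v y = f (w n) := by
        by_contra hnot
        push Not at hnot
        exact hno (h.exists_coloring hτv ⟨hm.ne_zero, hm.bound, hnot⟩ hm)
      refine ⟨hc, hx₀, fun t ht => ?_, fun t ht => ?_, hinj⟩
      · rcases Nat.lt_succ_iff_lt_or_eq.1 ht with ht | rfl
        exacts [h.misses t ht, hm]
      · rcases Nat.lt_succ_iff_lt_or_eq.1 ht with ht | rfl
        · exact h.color_eq t ht
        · rw [hws]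
          exact hg _ hex
  have hrep : ∃ n, ∃ j < n, f (w j) = f (w n) := by
    by_contra hnot
    push Not at hnot
    have hinj : ∀ s t, f (w s) = f (w t) → s = t := fun s t hst => by
      rcases lt_trichotomy s t with hlt | rfl | hlt
      exacts [(hnot t s hlt hst).elim, rfl, (hnot s t hlt hst.symm).elim]
    have hb : ∀ t, f (w t) ∈ Set.Icc (-(m : ℤ)) m := fun t => abs_le.1
      (hf (w t) ((hfan t fun s _ t _ => hinj s t).adj_of_le le_rfl)).bound
    exact Set.infinite_of_injective_forall_mem (fun s t => hinj s t) hb (Set.finite_Icc _ _)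
  obtain ⟨j, hj, hjn⟩ := Nat.find_spec hrep
  have h := hfan (Nat.find hrep) fun s hs t ht hst => by
    rcases lt_trichotomy s t with hlt | rfl | hlt
    exacts [(Nat.find_min hrep ht ⟨s, hlt, hst⟩).elim, rfl,
      (Nat.find_min hrep hs ⟨t, hlt, hst.symm⟩).elim]
  exact ⟨w, Nat.find hrep, j, h, rfl, hj, hjn ▸ hf _ (h.adj_of_le le_rfl)⟩

/-- An uncolorable graph has no coloring missing only an edge `v x₀` for which `α` is missing at
`v` and `-α` is missing at `x₀`. -/
lemma false_of_misses_neg {x₀ : V} (hτ : ∀ u w, τ u w = 1 ∨ τ u w = -1)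
    (hτv : ∀ x, G.Adj v x → τ v x = 1 ∧ τ x v = 1) (hno : ¬ ∃ c', IsSignedColoring G τ m c')
    (hc : IsSignedColoring (G.deleteEdges {s(v, x₀)}) τ m c) (hx₀ : G.Adj v x₀)
    (hmiss : ∀ x, G.Adj v x → ∃ z, Misses m c x z)
    (hmiss₀ : ∀ y, ∃ z, z ≠ y ∧ Misses m c x₀ z)
    (hα : Misses m c v α) (h0 : Misses m c x₀ (-α)) : False := by
  classical
  choose! f hf using hmiss
  obtain ⟨z, hz, hzm⟩ := hmiss₀ (-α)
  obtain ⟨w, n, j, h, hw0, hj, hjn⟩ := exists_repeat hτv hno hc hx₀ (Function.update f x₀ z)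
    fun x hx => by
      by_cases hxx : x = x₀
      · subst hxx
        simpa using hzm
      · simpa [hxx] using hf x hx
  set β : ℕ → ℤ := fun t => Function.update f x₀ z (w t) with hβdef
  have hpos : ∀ t < n, β t ≠ α := fun t ht htα =>
    hno ((h.mono ht.le).exists_coloring hτv hα (htα ▸ h.misses t ht))
  have h0w : Misses m c (w 0) (-α) := by rwa [hw0]
  have hneg : ∀ t < n, β t ≠ -α := by
    intro t
    induction t using Nat.strong_induction_on with
    | _ t ih =>
      intro ht htα
      rcases Nat.eq_zero_or_pos t with rfl | htpos
      · exact hz (by rw [← htα]; simp [hβdef, hw0])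
      · exact (h.mono ht.le).false_of_neg_misses_ends hτ hτv hno htpos hα h0w
          (htα ▸ h.misses t ht) fun s hs => ⟨hpos s (by omega), ih s hs (by omega)⟩
  exact h.false_of_repeat hτ hτv hno hα h0w hj hjn fun t ht => ⟨hpos t ht, hneg t ht⟩

/-- The fan argument: a coloring of all edges but one at `v` gives a coloring of all edges. -/
lemma exists_coloring_of_delete {x₀ : V} (hτ : ∀ u w, τ u w = 1 ∨ τ u w = -1)
    (hτv : ∀ x, G.Adj v x → τ v x = 1 ∧ τ x v = 1)
    (hmiss : ∀ c x₀, G.Adj v x₀ → IsSignedColoring (G.deleteEdges {s(v, x₀)}) τ m c →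
      (∃ z, Misses m c v z) ∧ (∀ x, G.Adj v x → ∃ z, Misses m c x z) ∧
        ∀ y, ∃ z, z ≠ y ∧ Misses m c x₀ z)
    (hc : IsSignedColoring (G.deleteEdges {s(v, x₀)}) τ m c) (hx₀ : G.Adj v x₀) :
    ∃ c', IsSignedColoring G τ m c' := by
  by_contra hno
  obtain ⟨⟨α, hα⟩, hm, -⟩ := hmiss c x₀ hx₀ hc
  choose! f hf using hm
  obtain ⟨w, n, j, h, hw0, hj, hjn⟩ := exists_repeat hτv hno hc hx₀ f hf
  set β : ℕ → ℤ := fun t => f (w t) with hβdef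
  have key : ∀ (c : V → V → ℤ) (k : ℕ), IsFan G τ m v c w β k → Misses m c v α →
      Misses m c (w k) (-α) → ¬ ∀ t < k, β t ≠ -α := by
    intro c k h hα hk hβ
    have hex : ∃ y, c v y = -α := by
      by_contra hnot
      push Not at hnot
      exact hno (h.exists_coloring hτv ⟨hk.ne_zero, hk.bound, hnot⟩ hk)
    obtain ⟨y, hy⟩ := hex
    have hext : IsFan G τ m v c (Function.update w (k + 1) y) (Function.update β k (-α))
        (k + 1) := by
      have hw : ∀ t ≤ k, Function.update w (k + 1) y t = w t := fun t ht =>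
        Function.update_of_ne (by omega) _ _
      have hb : ∀ t < k, Function.update β k (-α) t = β t := fun t ht =>
        Function.update_of_ne (by omega) _ _
      have hbk : Function.update β k (-α) k = -α := Function.update_self _ _ _
      refine ⟨?_, ?_, fun t ht => ?_, fun t ht => ?_, fun s hs t ht => ?_⟩
      · rw [hw 0 (by omega)]
        exact h.coloring
      · rw [hw 0 (by omega)]
        exact h.adj
      · rw [hw t (by omega)]
        rcases Nat.lt_succ_iff_lt_or_eq.1 ht with ht | rfl
        · rw [hb t ht]
          exact h.misses t ht
        · rwa [hbk]
      · rcases Nat.lt_succ_iff_lt_or_eq.1 ht with ht | rfl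
        · rw [hb t ht, hw (t + 1) ht]
          exact h.color_eq t ht
        · rw [hbk, Function.update_self, hy]
      · rcases Nat.lt_succ_iff_lt_or_eq.1 hs with hs | rfl <;>
          rcases Nat.lt_succ_iff_lt_or_eq.1 ht with ht | rfl
        · rw [hb s hs, hb t ht]
          exact h.inj s hs t ht
        · rw [hb s hs, hbk]
          exact fun hh => (hβ s hs hh).elim
        · rw [hb t ht, hbk]
          exact fun hh => (hβ t ht hh.symm).elim
        · exact fun _ => rfl
    have hadj := hext.adj_of_le le_rfl
    obtain ⟨c', hc', hv', -, hk'⟩ := hext.exists_shift hτv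
    have hk'' := hk' k rfl
    rw [Function.update_self (f := β)] at hk''
    obtain ⟨-, hm, hm₀⟩ := hmiss c' _ hadj hc'
    exact false_of_misses_neg hτ hτv hno hc' hadj hm hm₀ (hv' α hα) hk''
  have hpos : ∀ t < n, β t ≠ α := fun t ht htα =>
    hno ((h.mono ht.le).exists_coloring hτv hα (htα ▸ h.misses t ht))
  have hneg : ∀ t < n, β t ≠ -α := by
    intro t
    induction t using Nat.strong_induction_on with
    | _ t ih =>
      intro ht htα
      exact key c t (h.mono ht.le) hα (htα ▸ h.misses t ht) fun s hs => ih s hs (by omega)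
  have hopp : ∀ p q, p < q → q < n → β q ≠ -β p := by
    intro p q hpq hqn hqp
    obtain ⟨c', h', hα', hq', -⟩ := (h.mono hqn.le).exists_exchange_neg hτ hτv hno hα hpq
      (h.misses p (by omega)) (hqp ▸ h.misses q hqn)
      (fun t ht => ⟨hpos t (by omega), hneg t (by omega)⟩) fun t ht htp => by
        have := h.inj t (by omega) q hqn (htp.trans hqp.symm)
        omega
    exact key c' q h' hα' hq' fun t ht => hneg t (by omega)
  refine h.false_of_repeat_of_ne_neg hτ hτv hno hα hj hjn (fun t ht => ⟨hpos t ht, hneg t ht⟩)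
    fun t ht htj => ?_
  rcases lt_trichotomy t j with hlt | rfl | hlt
  · exact hopp t j hlt hj (by rw [htj, neg_neg])
  · have := (h.misses t ht).ne_zero
    change β t = -β t at htj
    omega
  · exact hopp j t hlt ht htj

end IsFan

end Fan

/-! ### Edge colorings of signed graphs -/

section Main

variable {V : Type*} {G : SimpleGraph V} {τ : V → V → ℤ} {m : ℕ} {c : V → V → ℤ}

/-- A color outside `t` is missing at `u` if there are fewer than `2 * m` colors that occur at `u`
or lie in `t`. -/
lemma exists_misses_notMem [Finite V] {u : V} (s : Set V) (t : Finset ℤ)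
    (hs : ∀ w, c u w ≠ 0 → w ∈ s) (hst : s.ncard + t.card < 2 * m) :
    ∃ z ∉ t, Misses m c u z := by
  classical
  have hfin := s.toFinite
  have hcard : ((Finset.Icc (-(m : ℤ)) m).erase 0).card = 2 * m := by
    rw [Finset.card_erase_of_mem (by simp), Int.card_Icc]
    omega
  obtain ⟨z, hz, hzt⟩ : ∃ z ∈ (Finset.Icc (-(m : ℤ)) m).erase 0,
      z ∉ hfin.toFinset.image (c u) ∪ t := by
    refine Finset.exists_mem_notMem_of_card_lt_card ?_
    calc (hfin.toFinset.image (c u) ∪ t).card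
        ≤ (hfin.toFinset.image (c u)).card + t.card := Finset.card_union_le _ _
      _ ≤ s.ncard + t.card := by
        rw [Set.ncard_eq_toFinset_card s hfin]
        exact Nat.add_le_add_right Finset.card_image_le _
      _ < _ := hcard ▸ hst
  rw [Finset.mem_erase, Finset.mem_Icc] at hz
  rw [Finset.mem_union, not_or] at hzt
  refine ⟨z, hzt.2, hz.1, abs_le.2 hz.2, fun w hw => hzt.1 ?_⟩
  exact Finset.mem_image.2 ⟨w, hfin.mem_toFinset.2 (hs w (hw ▸ hz.1)), hw⟩

/-- Switching by `s` turns colorings for `τ` into colorings for the switched factors. -/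
lemma IsSignedColoring.switch (hc : IsSignedColoring G τ m c) {s : V → ℤ}
    (hs : ∀ u, s u = 1 ∨ s u = -1) :
    IsSignedColoring G (fun u w => s u * s w * τ u w) m fun u w => s u * c u w := by
  have hs0 : ∀ u, s u ≠ 0 := fun u => by rcases hs u with h | h <;> simp [h]
  refine ⟨fun u w => ?_, fun u w => ?_, fun u w => ?_, fun u x y h h' => ?_⟩
  · rw [hc.compat u w]
    rcases hs w with h | h <;> rw [h] <;> ring
  · rw [← hc.supp u w, mul_ne_zero_iff, and_iff_right (hs0 u)]
  · rcases hs u with h | h <;> simpa [h] using hc.bound u w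
  · exact hc.proper u x y (right_ne_zero_of_mul h) (mul_left_cancel₀ (hs0 u) h')

/-- A coloring of all edges but one at `v` gives a coloring of all edges, if `v` has at most as
many neighbors as there are colors, and each neighbor of `v` has fewer. -/
lemma exists_coloring_of_deleteEdges [Finite V] {v x₀ : V}
    (hτ : ∀ u w, τ u w = 1 ∨ τ u w = -1) (hsymm : ∀ u w, τ u w = τ w u)
    (hv : (G.neighborSet v).ncard ≤ 2 * m)
    (hnbr : ∀ x, G.Adj v x → (G.neighborSet x).ncard < 2 * m)
    (hc : IsSignedColoring (G.deleteEdges {s(v, x₀)}) τ m c) (hx₀ : G.Adj v x₀) :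
    ∃ c', IsSignedColoring G τ m c' := by
  classical
  let s : V → ℤ := fun u => if u = v then 1 else τ v u
  have hs : ∀ u, s u = 1 ∨ s u = -1 := fun u => by
    simp only [s]
    split_ifs
    exacts [Or.inl rfl, hτ v u]
  have hss : ∀ u, s u * s u = 1 := fun u => by rcases hs u with h | h <;> simp [h]
  have hτv : ∀ x, G.Adj v x → s v * s x * τ v x = 1 := fun x hx => by
    have h1 : s v = 1 := if_pos rfl
    have h2 : s x = τ v x := if_neg hx.ne'
    have h3 := hss x
    rw [h1, one_mul, ← h2, h3]
  have hmiss : ∀ c x, G.Adj v x →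
      IsSignedColoring (G.deleteEdges {s(v, x)}) (fun u w => s u * s w * τ u w) m c →
      (∃ z, Misses m c v z) ∧ (∀ y, G.Adj v y → ∃ z, Misses m c y z) ∧
        ∀ y, ∃ z, z ≠ y ∧ Misses m c x z := by
    intro c x hx hc
    have hadj : ∀ u w, c u w ≠ 0 → w ∈ G.neighborSet u := fun u w h =>
      ((deleteEdges_adj).1 ((hc.supp u w).1 h)).1
    have hdel : ∀ w, c x w ≠ 0 → w ∈ G.neighborSet x \ {v} := fun w h =>
      ⟨hadj x w h, fun hw => ((deleteEdges_adj).1 ((hc.supp x w).1 h)).2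
        (by rw [Set.mem_singleton_iff.1 hw]; exact Sym2.eq_swap)⟩
    have hdel' : ∀ w, c v w ≠ 0 → w ∈ G.neighborSet v \ {x} := fun w h =>
      ⟨hadj v w h, fun hw => ((deleteEdges_adj).1 ((hc.supp v w).1 h)).2
        (by rw [Set.mem_singleton_iff.1 hw]; rfl)⟩
    have hcx := Set.ncard_sdiff_singleton_add_one (show v ∈ G.neighborSet x from hx.symm)
    have hcv := Set.ncard_sdiff_singleton_add_one (show x ∈ G.neighborSet v from hx)
    refine ⟨?_, fun y hy => ?_, fun y => ?_⟩
    · obtain ⟨z, -, hz⟩ := exists_misses_notMem (m := m) _ ∅ hdel'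
        (by rw [Finset.card_empty]; omega)
      exact ⟨z, hz⟩
    · obtain ⟨z, -, hz⟩ := exists_misses_notMem (m := m) _ ∅ (hadj y) (hnbr y hy)
      exact ⟨z, hz⟩
    · obtain ⟨z, hzy, hz⟩ := exists_misses_notMem (m := m) _ {y} hdel
        (by rw [Finset.card_singleton, hcx]; exact hnbr x hx)
      exact ⟨z, fun h => hzy (Finset.mem_singleton.2 h), hz⟩
  obtain ⟨c', hc'⟩ := IsFan.exists_coloring_of_delete (τ := fun u w => s u * s w * τ u w)
    (fun u w => by
      rcases hs u with h | h <;> rcases hs w with h' | h' <;> rcases hτ u w with h'' | h'' <;>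
        simp [h, h', h''])
    (fun x hx => ⟨hτv x hx, by rw [mul_comm (s x), hsymm]; exact hτv x hx⟩)
    hmiss (hc.switch hs) hx₀
  have hττ : (fun u w => s u * s w * (s u * s w * τ u w)) = τ := funext₂ fun u w => by
    calc s u * s w * (s u * s w * τ u w) = s u * s u * (s w * s w) * τ u w := by ring
      _ = τ u w := by rw [hss, hss, one_mul, one_mul]
  exact ⟨_, hττ ▸ hc'.switch hs⟩

/-- A signed graph with degrees at most `2 * m` in which vertices of degree `2 * m` are not
adjacent has a coloring with `2 * m` colors. -/
lemma exists_isSignedColoring [Finite V] (hτ : ∀ u w, τ u w = 1 ∨ τ u w = -1)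
    (hsymm : ∀ u w, τ u w = τ w u) (G : SimpleGraph V)
    (hdeg : ∀ v, (G.neighborSet v).ncard ≤ 2 * m)
    (hind : ∀ v w, G.Adj v w → (G.neighborSet v).ncard = 2 * m →
      (G.neighborSet w).ncard ≠ 2 * m) :
    ∃ c, IsSignedColoring G τ m c := by
  induction G using WellFoundedLT.induction with
  | _ G ih =>
  by_cases hG : ∃ v w, G.Adj v w
  swap
  · push Not at hG
    exact ⟨fun _ _ => 0, by simp, by simpa using hG, by simp, by simp⟩
  obtain ⟨v, x, hvx, hnbr⟩ : ∃ v x, G.Adj v x ∧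
      ∀ y, G.Adj v y → (G.neighborSet y).ncard < 2 * m := by
    by_cases hfull : ∃ v x, G.Adj v x ∧ (G.neighborSet v).ncard = 2 * m
    · obtain ⟨v, x, hvx, hv⟩ := hfull
      exact ⟨v, x, hvx, fun y hy => (hdeg y).lt_of_ne (hind v y hy hv)⟩
    · push Not at hfull
      obtain ⟨v, x, hvx⟩ := hG
      exact ⟨v, x, hvx, fun y hy => (hdeg y).lt_of_ne (hfull y v hy.symm)⟩
  have hle : G.deleteEdges {s(v, x)} ≤ G := deleteEdges_le _
  have hlt : G.deleteEdges {s(v, x)} < G := hle.lt_of_ne fun h => by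
    rw [← h] at hvx
    exact (deleteEdges_adj.1 hvx).2 rfl
  have hcard : ∀ u, ((G.deleteEdges {s(v, x)}).neighborSet u).ncard ≤ (G.neighborSet u).ncard :=
    fun u => Set.ncard_le_ncard fun w hw => hle hw
  obtain ⟨c, hc⟩ := ih _ hlt (fun u => (hcard u).trans (hdeg u)) fun u w huw hu hw =>
    hind u w (hle huw) ((hdeg u).antisymm (hu ▸ hcard u)) ((hdeg w).antisymm (hw ▸ hcard w))
  exact exists_coloring_of_deleteEdges hτ hsymm (hdeg v) hnbr hc hvx

end Main

/-- If `Δ(Σ)` is even and the set of vertices of maximum degree is an independent set,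
then `Σ` admits a proper edge coloring with `Δ(Σ)` colors. -/
theorem colorable_of_maxDegree_indep {V : Type*} [Fintype V] (G : SimpleGraph V)
    [DecidableRel G.Adj] (σ : Sym2 V → ℤ)
    (hσ : ∀ e ∈ G.edgeSet, σ e = 1 ∨ σ e = -1)
    (hΔ : Even G.maxDegree)
    (hind : ∀ v w : V, G.degree v = G.maxDegree → G.degree w = G.maxDegree →
      ¬G.Adj v w) :
    ∃ c : SColoring G σ G.maxDegree, c.Proper := by
  classical
  obtain ⟨m, hm⟩ := hΔ
  have hm2 : G.maxDegree = 2 * m := by omega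
  have hcard : ∀ v, (G.neighborSet v).ncard = G.degree v := fun v => by
    rw [Set.ncard_eq_toFinset_card', ← neighborFinset_def, card_neighborFinset_eq_degree]
  let τ : V → V → ℤ := fun u w => if G.Adj u w then -σ s(u, w) else 1
  have hτ : ∀ u w, τ u w = 1 ∨ τ u w = -1 := fun u w => by
    by_cases h : G.Adj u w
    · rcases hσ s(u, w) h with h' | h' <;> simp [τ, h, h']
    · simp [τ, h]
  have hsymm : ∀ u w, τ u w = τ w u := fun u w => by
    simp only [τ, G.adj_comm u w, Sym2.eq_swap (a := u)]
  obtain ⟨c, hc⟩ := exists_isSignedColoring (m := m) hτ hsymm G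
    (fun v => by rw [hcard, ← hm2]; exact G.degree_le_maxDegree v)
    (fun v w hvw hv hw => hind v w (by rw [← hcard, hv, hm2]) (by rw [← hcard, hw, hm2]) hvw)
  let col : V → Sym2 V → ℤ := fun v e => if h : v ∈ e then c v (Sym2.Mem.other h) else 0
  have hcol : ∀ v w, col v s(v, w) = c v w := fun v w => by
    have h : v ∈ s(v, w) := Sym2.mem_mk_left v w
    have hw : Sym2.Mem.other h = w := Sym2.congr_right.1 (Sym2.other_spec h)
    simp only [col, dif_pos h, hw]
  refine ⟨⟨col, fun v w hvw => ?_, fun v w hvw => ?_⟩, fun v w x hvw hvx hne h => hne ?_⟩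
  · have hb := hc.bound v w
    have h0 := (hc.supp v w).2 hvw
    rw [hcol]
    refine ⟨?_, fun h => (h0 h).elim⟩
    rw [Int.abs_eq_natAbs] at hb
    omega
  · rw [hcol, Sym2.eq_swap, hcol, hc.compat v w]
    simp only [τ, if_pos hvw, Sym2.eq_swap (a := v)]
  · change col v s(v, w) = col v s(v, x) at h
    rw [hcol, hcol] at h
    exact hc.proper v w x ((hc.supp v w).2 hvw) h
end

section
/- Let Σ = (Γ, σ) be a signed simple graph with Δ(Σ) even. Then χ'(Σ) ≤ Δ(Σ) + 1. -/
open SimpleGraph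

/-- A connected finite graph of maximum degree at most two has at most two vertices of degree
at most one. -/
theorem not_three_ends {W : Type*} {K : SimpleGraph W} (C : K.ConnectedComponent)
    (hfin : C.supp.Finite) (h2 : ∀ x ∈ C.supp, ∃ f g, ∀ y, K.Adj x y → y = f ∨ y = g)
    {p q r : W} (hpq : p ≠ q) (hpr : p ≠ r) (hqr : q ≠ r)
    (hp : p ∈ C.supp) (hq : q ∈ C.supp) (hr : r ∈ C.supp)
    (h1 : ∀ x, x = p ∨ x = q ∨ x = r → ∃ f, ∀ y, K.Adj x y → y = f) : False := by
  classical
  have : Fintype C.supp := hfin.fintype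
  have hc : (K.induce C.supp).Connected := C.connected_toSimpleGraph
  set T := K.induce C.supp with hT
  have hle := hc.card_vert_le_card_edgeSet_add_one
  have hsum := T.sum_degrees_eq_twice_card_edges
  rw [Nat.card_eq_fintype_card, Nat.card_eq_fintype_card, ← edgeFinset_card] at hle
  let E : Finset C.supp := {⟨p, hp⟩, ⟨q, hq⟩, ⟨r, hr⟩}
  have hE : E.card = 3 := Finset.card_eq_three.2
    ⟨_, _, _, by simpa using hpq, by simpa using hpr, by simpa using hqr, rfl⟩
  have hdeg : ∀ x : C.supp, T.degree x + (if x ∈ E then 1 else 0) ≤ 2 := by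
    intro x
    split_ifs with hx
    · obtain ⟨f, hf⟩ := h1 x (by simpa [E, Subtype.ext_iff] using hx)
      have : T.degree x ≤ 1 := by
        rw [← card_neighborFinset_eq_degree]
        refine Finset.card_le_one.2 fun a ha b hb => ?_
        rw [mem_neighborFinset] at ha hb
        exact Subtype.ext ((hf _ ha).trans (hf _ hb).symm)
      omega
    · obtain ⟨f, g, hfg⟩ := h2 x x.2
      rw [← card_neighborFinset_eq_degree, ← Finset.card_map (Function.Embedding.subtype _)]
      refine (Finset.card_le_card (t := {f, g}) fun a ha => ?_).trans Finset.card_le_two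
      obtain ⟨b, hb, rfl⟩ := Finset.mem_map.1 ha
      rw [mem_neighborFinset] at hb
      simpa using hfg _ hb
  have := Finset.sum_le_sum fun x (_ : x ∈ Finset.univ) => hdeg x
  rw [Finset.sum_add_distrib, hsum, Finset.sum_boole, Finset.sum_const] at this
  simp [hE] at this
  simp at hle
  omega

/-- The nonzero signed colors of absolute value at most `k`. -/
def IsColor (k : ℕ) (a : ℤ) : Prop :=
  a ≠ 0 ∧ a.natAbs ≤ k

/-- `c` is a proper zero-free signed edge coloring of `H`, where `c v w` is the color at `v` of the
edge `vw` and `τ v w = ±1` relates the colors of the two incidences of that edge. -/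
structure IsSignedColoring_s3 {V : Type*} (τ : V → V → ℤ) (k : ℕ) (H : SimpleGraph V)
    (c : V → V → ℤ) : Prop where
  isColor : ∀ ⦃v w⦄, H.Adj v w → IsColor k (c v w)
  compat : ∀ ⦃v w⦄, H.Adj v w → c v w = τ v w * c w v
  inj : ∀ ⦃v w x⦄, H.Adj v w → H.Adj v x → c v w = c v x → w = x

/-- No edge of `H` at `v` has color `a` at `v`. -/
def Misses_s3 {V : Type*} (H : SimpleGraph V) (c : V → V → ℤ) (v : V) (a : ℤ) : Prop :=
  ∀ ⦃w⦄, H.Adj v w → c v w ≠ a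

/-- The odd involution of `ℤ` exchanging `α` with `β` and `-α` with `-β`. -/
def exchange (α β a : ℤ) : ℤ :=
  if a = α then β else if a = β then α else if a = -α then -β else if a = -β then -α else a

/-- A pair of nonzero distinct colors within the palette. -/
structure IsColorPair (k : ℕ) (α β : ℤ) : Prop where
  left : IsColor k α
  right : IsColor k β
  ne : α ≠ β

theorem IsColor.neg {k : ℕ} {a : ℤ} (h : IsColor k a) : IsColor k (-a) := by
  unfold IsColor at *; omega

theorem IsColor.sign_mul {k : ℕ} {a t : ℤ} (ht : t = 1 ∨ t = -1) (h : IsColor k a) :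
    IsColor k (t * a) := by
  rcases ht with rfl | rfl
  · simpa using h
  · simpa using h.neg

namespace IsColorPair

variable {k : ℕ} {α β : ℤ}

theorem exchange_exchange (h : IsColorPair k α β) (a : ℤ) : exchange α β (exchange α β a) = a := by
  obtain ⟨⟨_, _⟩, ⟨_, _⟩, _⟩ := h
  unfold exchange
  split_ifs <;> omega

theorem exchange_neg (h : IsColorPair k α β) (a : ℤ) : exchange α β (-a) = -exchange α β a := by
  obtain ⟨⟨_, _⟩, ⟨_, _⟩, _⟩ := h
  unfold exchange
  split_ifs <;> omega

theorem exchange_sign_mul (h : IsColorPair k α β) {t : ℤ} (ht : t = 1 ∨ t = -1)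
    (a : ℤ) :
    exchange α β (t * a) = t * exchange α β a := by
  rcases ht with rfl | rfl
  · simp
  · simpa using h.exchange_neg a

theorem isColor_exchange (h : IsColorPair k α β) {a : ℤ} (ha : IsColor k a) :
    IsColor k (exchange α β a) := by
  obtain ⟨⟨_, _⟩, ⟨_, _⟩, _⟩ := h
  unfold exchange IsColor at *
  split_ifs <;> omega

end IsColorPair

/-- The graph whose connected components are the Kempe chains for the pairs `{α, β}` and
`{-α, -β}`: a state `(v, a)` is joined to the state at `v` with the exchanged color, and to the
other incidence of the edge having color `a` at `v`. -/
def kempe {V : Type*} (H : SimpleGraph V) (c : V → V → ℤ) (α β : ℤ) : SimpleGraph (V × ℤ) :=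
  SimpleGraph.fromRel fun p q => (p.1 = q.1 ∧ q.2 = exchange α β p.2) ∨
    (H.Adj p.1 q.1 ∧ c p.1 q.1 = p.2 ∧ c q.1 p.1 = q.2)

open Classical in
/-- Exchange the colors along the Kempe chain of the state `s`. -/
noncomputable def kempeSwap {V : Type*} (H : SimpleGraph V) (c : V → V → ℤ) (α β : ℤ) (s : V × ℤ)
    (v w : V) : ℤ :=
  if (kempe H c α β).Reachable s (v, c v w) then exchange α β (c v w) else c v w

section Kempe

variable {V : Type*} {H : SimpleGraph V} {c : V → V → ℤ} {α β : ℤ} {k : ℕ} {τ : V → V → ℤ}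

theorem kempe_adj_cases (h : IsColorPair k α β) {p q : V × ℤ} (hpq : (kempe H c α β).Adj p q) :
    q = (p.1, exchange α β p.2) ∨ (H.Adj p.1 q.1 ∧ c p.1 q.1 = p.2 ∧ c q.1 p.1 = q.2) := by
  obtain ⟨-, (⟨h1, h2⟩ | h1) | (⟨h1, h2⟩ | ⟨h1, h2, h3⟩)⟩ := (SimpleGraph.fromRel_adj _ _ _).1 hpq
  · exact Or.inl (Prod.ext h1.symm h2)
  · exact Or.inr h1
  · exact Or.inl (Prod.ext h1 (by rw [h2, h.exchange_exchange]))
  · exact Or.inr ⟨h1.symm, h3, h2⟩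

theorem kempe_reachable_exchange_right {s : V × ℤ} {v : V} {a : ℤ} :
    (kempe H c α β).Reachable s (v, exchange α β a) ↔ (kempe H c α β).Reachable s (v, a) := by
  have key : (kempe H c α β).Reachable (v, a) (v, exchange α β a) := by
    by_cases ha : exchange α β a = a
    · rw [ha]
    · exact Adj.reachable ((SimpleGraph.fromRel_adj _ _ _).2
        ⟨fun hh => ha (congrArg Prod.snd hh).symm, Or.inl (Or.inl ⟨rfl, rfl⟩)⟩)
  exact ⟨fun hh => hh.trans key.symm, fun hh => hh.trans key⟩

theorem kempe_reachable_edge {s : V × ℤ} {v w : V} (hvw : H.Adj v w) :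
    (kempe H c α β).Reachable s (v, c v w) ↔ (kempe H c α β).Reachable s (w, c w v) := by
  have key : (kempe H c α β).Reachable (v, c v w) (w, c w v) :=
    Adj.reachable ((SimpleGraph.fromRel_adj _ _ _).2
      ⟨fun hh => hvw.ne (congrArg Prod.fst hh), Or.inl (Or.inr ⟨hvw, rfl, rfl⟩)⟩)
  exact ⟨fun hh => hh.trans key, fun hh => hh.trans key.symm⟩

/-- A Kempe chain has at most two ends. -/
theorem kempe_not_three_ends [Finite V] (hc : IsSignedColoring_s3 τ k H c) (h : IsColorPair k α β)
    {p q r : V × ℤ} (hpq : p ≠ q) (hpr : p ≠ r) (hqr : q ≠ r)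
    (rpq : (kempe H c α β).Reachable p q) (rpr : (kempe H c α β).Reachable p r)
    (hp : Misses_s3 H c p.1 p.2) (hq : Misses_s3 H c q.1 q.2) (hr : Misses_s3 H c r.1 r.2)
    (hcol : IsColor k p.2) : False := by
  have hstay : ∀ x, (kempe H c α β).Reachable p x → IsColor k x.2 := by
    intro x hx
    rw [SimpleGraph.reachable_iff_reflTransGen] at hx
    induction hx with
    | refl => exact hcol
    | tail _ hxy ih =>
      rcases kempe_adj_cases h hxy with e | ⟨e1, -, e2⟩
      · rw [e]; exact h.isColor_exchange ih
      · rw [← e2]; exact hc.isColor e1.symm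
  refine not_three_ends ((kempe H c α β).connectedComponentMk p) ?_ ?_ hpq hpr hqr rfl
    (ConnectedComponent.sound rpq.symm) (ConnectedComponent.sound rpr.symm) ?_
  · refine (Set.Finite.prod (Set.finite_univ (α := V)) (Set.finite_Icc (-(k : ℤ)) k)).subset ?_
    intro x hx
    have := (hstay x (ConnectedComponent.exact hx).symm).2
    refine ⟨trivial, ?_, ?_⟩ <;> omega
  · intro x _
    by_cases hx : ∃ w, H.Adj x.1 w ∧ c x.1 w = x.2
    · obtain ⟨w, hw, hwx⟩ := hx
      refine ⟨(x.1, exchange α β x.2), (w, c w x.1), fun y hy => ?_⟩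
      rcases kempe_adj_cases h hy with e | ⟨e1, e2, e3⟩
      · exact Or.inl e
      · obtain rfl := hc.inj hw e1 (hwx.trans e2.symm)
        exact Or.inr (Prod.ext rfl e3.symm)
    · refine ⟨(x.1, exchange α β x.2), x, fun y hy => ?_⟩
      rcases kempe_adj_cases h hy with e | ⟨e1, e2, e3⟩
      · exact Or.inl e
      · exact absurd ⟨_, e1, e2⟩ hx
  · intro x hx
    have hx : Misses_s3 H c x.1 x.2 := by rcases hx with rfl | rfl | rfl <;> assumption
    refine ⟨(x.1, exchange α β x.2), fun y hy => ?_⟩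
    rcases kempe_adj_cases h hy with e | ⟨e1, e2, e3⟩
    · exact e
    · exact absurd e2 (hx e1)

theorem IsSignedColoring_s3.kempeSwap (hτ : ∀ v w, τ v w = 1 ∨ τ v w = -1)
    (hc : IsSignedColoring_s3 τ k H c) (h : IsColorPair k α β) (s : V × ℤ) :
    IsSignedColoring_s3 τ k H (kempeSwap H c α β s) where
  isColor v w hvw := by
    unfold _root_.kempeSwap
    split_ifs
    exacts [h.isColor_exchange (hc.isColor hvw), hc.isColor hvw]
  compat v w hvw := by
    unfold _root_.kempeSwap
    have hr := kempe_reachable_edge (c := c) (α := α) (β := β) (s := s) hvw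
    split_ifs with h1 h2 h2
    · rw [hc.compat hvw, h.exchange_sign_mul (hτ v w)]
    · exact absurd (hr.1 h1) h2
    · exact absurd (hr.2 h2) h1
    · exact hc.compat hvw
  inj v w x hvw hvx e := by
    unfold _root_.kempeSwap at e
    refine hc.inj hvw hvx ?_
    split_ifs at e with h1 h2 h2
    · rw [← h.exchange_exchange (c v w), e, h.exchange_exchange]
    · exact absurd (by rwa [← e, kempe_reachable_exchange_right]) h2
    · exact absurd (by rwa [e, kempe_reachable_exchange_right]) h1
    · exact e

theorem misses_kempeSwap_of_reachable (h : IsColorPair k α β) {s : V × ℤ} {v : V} {a : ℤ}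
    (hs : (kempe H c α β).Reachable s (v, a)) :
    Misses_s3 H (kempeSwap H c α β s) v a ↔ Misses_s3 H c v (exchange α β a) := by
  refine forall₂_congr fun w _ => not_congr ?_
  unfold kempeSwap
  split_ifs with hr
  · exact ⟨fun e => by rw [← e, h.exchange_exchange], fun e => by rw [e, h.exchange_exchange]⟩
  · refine iff_of_false (fun e => hr (by rwa [e])) fun e => hr ?_
    rwa [e, kempe_reachable_exchange_right]

theorem misses_kempeSwap_of_not_reachable {s : V × ℤ} {v : V} {a : ℤ}
    (hs : ¬ (kempe H c α β).Reachable s (v, a)) :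
    Misses_s3 H (kempeSwap H c α β s) v a ↔ Misses_s3 H c v a := by
  refine forall₂_congr fun w _ => not_congr ?_
  unfold kempeSwap
  split_ifs with hr
  · refine iff_of_false (fun e => hs ?_) fun e => hs (by rwa [← e])
    rwa [← e, kempe_reachable_exchange_right]
  · rfl

end Kempe

/-- The graph `G` without the edge joining `u` and `h`. -/
def hole {V : Type*} (G : SimpleGraph V) (u h : V) : SimpleGraph V :=
  G.deleteEdges {s(u, h)}

open Classical in
/-- Give both incidences of the edge `uh` the color `a`. -/
noncomputable def insertEdge {V : Type*} (c : V → V → ℤ) (u h : V) (a : ℤ) (x y : V) : ℤ :=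
  if s(x, y) = s(u, h) then a else c x y

/-- In a fan at `u`, the vertex `x` may be followed by `y` if the color of `uy` at `u` is missing
at `x`; the colors in `F` must not be used. -/
def FanStep {V : Type*} (H : SimpleGraph V) (c : V → V → ℤ) (u : V) (F : Set ℤ) (x y : V) : Prop :=
  H.Adj u y ∧ Misses_s3 H c x (c u y) ∧ c u y ∉ F

/-- `w` is reached by a fan at `u` starting from `h` and avoiding the colors in `F`. -/
def FanReach {V : Type*} (H : SimpleGraph V) (c : V → V → ℤ) (u : V) (F : Set ℤ) : V → V → Prop :=
  Relation.ReflTransGen (FanStep H c u F)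

section Fan

variable {V : Type*} {G H : SimpleGraph V} {c : V → V → ℤ} {α β : ℤ} {k : ℕ} {τ : V → V → ℤ}
  {u h : V} {F : Set ℤ}

theorem hole_adj {x y : V} : (hole G u h).Adj x y ↔ G.Adj x y ∧ s(x, y) ≠ s(u, h) := by
  simp [hole, SimpleGraph.deleteEdges_adj]

theorem hole_adj_left {y : V} : (hole G u h).Adj u y ↔ G.Adj u y ∧ y ≠ h := by
  rw [hole_adj]
  simp only [ne_eq, Sym2.eq_iff, true_and]
  constructor
  · rintro ⟨h1, h2⟩; exact ⟨h1, fun e => h2 (Or.inl e)⟩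
  · rintro ⟨h1, h2⟩; exact ⟨h1, by rintro (e | ⟨rfl, rfl⟩) <;> contradiction⟩

theorem hole_adj_of_ne {x y : V} (hxu : x ≠ u) (hxh : x ≠ h) :
    (hole G u h).Adj x y ↔ G.Adj x y := by
  rw [hole_adj, and_iff_left]
  simp [hxu, hxh]

theorem FanReach.adj {w : V} (huh : G.Adj u h) (hw : FanReach (hole G u h) c u F h w) :
    G.Adj u w := by
  rcases Relation.ReflTransGen.cases_tail hw with rfl | ⟨_, _, hs⟩
  exacts [huh, (hole_adj_left.1 hs.1).1]

theorem insertEdge_of_ne {a : ℤ} {x y : V} (hxu : x ≠ u) (hxh : x ≠ h) :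
    insertEdge c u h a x y = c x y :=
  if_neg (by simp [hxu, hxh])

theorem insertEdge_left_of_ne {a : ℤ} {y : V} (huh : u ≠ h) (hyh : y ≠ h) :
    insertEdge c u h a u y = c u y :=
  if_neg (by simp [hyh, huh])

theorem IsSignedColoring_s3.mono {H' : SimpleGraph V} (hc : IsSignedColoring_s3 τ k H c) (hH : H' ≤ H) :
    IsSignedColoring_s3 τ k H' c :=
  ⟨fun _ _ e => hc.isColor (hH e), fun _ _ e => hc.compat (hH e),
    fun _ _ _ e f => hc.inj (hH e) (hH f)⟩

theorem IsSignedColoring_s3.insertEdge {H' : SimpleGraph V} {a : ℤ} (hc : IsSignedColoring_s3 τ k H c)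
    (huh : τ u h = 1) (hhu : τ h u = 1)
    (hH : ∀ x y, H'.Adj x y → s(x, y) ≠ s(u, h) → H.Adj x y) (ha : IsColor k a)
    (mu : Misses_s3 H c u a) (mh : Misses_s3 H c h a) :
    IsSignedColoring_s3 τ k H' (insertEdge c u h a) where
  isColor v w hvw := by
    unfold _root_.insertEdge
    split_ifs with e
    exacts [ha, hc.isColor (hH _ _ hvw e)]
  compat v w hvw := by
    unfold _root_.insertEdge
    rw [Sym2.eq_swap (a := w)]
    split_ifs with e
    · rcases Sym2.eq_iff.1 e with ⟨rfl, rfl⟩ | ⟨rfl, rfl⟩ <;> simp [huh, hhu]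
    · exact hc.compat (hH _ _ hvw e)
  inj v w x hvw hvx e := by
    have key : ∀ y z, s(v, y) = s(u, h) → H'.Adj v z → s(v, z) ≠ s(u, h) → c v z ≠ a := by
      intro y z e1 e2 e3
      rcases Sym2.eq_iff.1 e1 with ⟨rfl, rfl⟩ | ⟨rfl, rfl⟩
      exacts [mu (hH _ _ e2 e3), mh (hH _ _ e2 e3)]
    unfold _root_.insertEdge at e
    split_ifs at e with e1 e2 e2
    · exact Sym2.congr_right.1 (e1.trans e2.symm)
    · exact absurd e.symm (key _ _ e1 hvx e2)
    · exact absurd e (key _ _ e2 hvw e1)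
    · exact hc.inj (hH _ _ hvw e1) (hH _ _ hvx e2) e

/-- A walk leaving its starting point can be shortened so as never to return to its second
vertex. -/
theorem exists_first_step [DecidableEq V] {r : V → V → Prop} {A : Finset V} {x w : V}
    (hw : Relation.ReflTransGen (fun a b => b ∈ A ∧ r a b) x w) :
    w = x ∨ ∃ v ∈ A, r x v ∧ Relation.ReflTransGen (fun a b => b ∈ A.erase v ∧ r a b) v w := by
  induction hw with
  | refl => exact Or.inl rfl
  | @tail b d _ hbd ih =>
    refine Or.inr ?_
    rcases ih with rfl | ⟨v, hv, hxv, hvb⟩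
    · exact ⟨d, hbd.1, hbd.2, .refl⟩
    · by_cases hdv : d = v
      · subst hdv; exact ⟨d, hv, hxv, .refl⟩
      · exact ⟨v, hv, hxv, hvb.tail ⟨Finset.mem_erase.2 ⟨hdv, hbd.1⟩, hbd.2⟩⟩

/-- Shifting the colors along a fan moves the uncolored edge from `uh` to `uw`. -/
theorem exists_shift [DecidableEq V] (hτu : ∀ w, τ u w = 1) (hτu' : ∀ w, τ w u = 1) {w : V}
    (A : Finset V) (c : V → V → ℤ) (h : V) (hc : IsSignedColoring_s3 τ k (hole G u h) c)
    (huh : G.Adj u h) (hA : h ∉ A)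
    (hw : Relation.ReflTransGen (fun a b => b ∈ A ∧ FanStep (hole G u h) c u F a b) h w) :
    ∃ c' : V → V → ℤ, IsSignedColoring_s3 τ k (hole G u w) c' ∧
      (∀ a, Misses_s3 (hole G u h) c u a → Misses_s3 (hole G u w) c' u a) ∧
      (∀ a, Misses_s3 (hole G u h) c w a → Misses_s3 (hole G u w) c' w a) ∧
      (∀ x y, x ≠ u → y ≠ u → c' x y = c x y) ∧
      ∀ x ∉ insert h A, c' u x = c u x ∧ c' x u = c x u := by
  induction A using Finset.strongInduction generalizing c h with
  | H A ih =>
  rcases exists_first_step hw with rfl | ⟨v, hvA, ⟨huv, hmv, hvF⟩, hvw⟩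
  · exact ⟨c, hc, fun _ => id, fun _ => id, fun _ _ _ _ => rfl, fun _ _ => ⟨rfl, rfl⟩⟩
  obtain ⟨huv', hvh⟩ := hole_adj_left.1 huv
  set d := c u v with hd
  set c₁ := insertEdge c u h d with hc₁
  have hcol : IsSignedColoring_s3 τ k (hole G u v) c₁ := by
    refine (hc.mono (inf_le_left (b := hole G u v))).insertEdge (hτu h) (hτu' h) ?_
      (hc.isColor huv) ?_ ?_
    · exact fun x y e1 e2 => ⟨hole_adj.2 ⟨(hole_adj.1 e1).1, e2⟩, e1⟩
    · exact fun z hz e => (hole_adj_left.1 hz.2).2 (hc.inj hz.1 huv e)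
    · exact fun z hz => hmv hz.1
  have hmiss : ∀ x a, x ≠ u → x ≠ h → Misses_s3 (hole G u h) c x a → Misses_s3 (hole G u v) c₁ x a := by
    intro x a hxu hxh hx z hz
    rw [hc₁, insertEdge_of_ne hxu hxh]
    exact hx ((hole_adj_of_ne hxu hxh).2 (hole_adj.1 hz).1)
  have hmissu : ∀ a, Misses_s3 (hole G u h) c u a → Misses_s3 (hole G u v) c₁ u a := by
    intro a ha z hz
    by_cases hzh : z = h
    · subst hzh
      rw [hc₁, insertEdge, if_pos rfl]
      exact ha huv
    · rw [hc₁, insertEdge_left_of_ne huh.ne hzh]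
      exact ha (hole_adj_left.2 ⟨(hole_adj_left.1 hz).1, hzh⟩)
  have hreach : Relation.ReflTransGen
      (fun a b => b ∈ A.erase v ∧ FanStep (hole G u v) c₁ u F a b) v w ∧ w ≠ u ∧ w ≠ h := by
    clear hw ih
    induction hvw with
    | refl => exact ⟨.refl, huv'.ne', hvh⟩
    | @tail b d _ hbd ih' =>
      obtain ⟨hdA, hud, hbd, hdF⟩ := hbd
      obtain ⟨hud', hdh⟩ := hole_adj_left.1 hud
      have hcd : c₁ u d = c u d := insertEdge_left_of_ne huh.ne hdh
      refine ⟨ih'.1.tail ⟨hdA, hole_adj_left.2 ⟨hud', (Finset.mem_erase.1 hdA).1⟩, ?_, ?_⟩,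
        hud'.ne', hdh⟩
      · rw [hcd]; exact hmiss _ _ ih'.2.1 ih'.2.2 hbd
      · rwa [hcd]
  obtain ⟨hr, hwu, hwh⟩ := hreach
  obtain ⟨c', h1, h2, h3, h4, h5⟩ := ih _ (Finset.erase_ssubset hvA) c₁ v hcol huv'
    (Finset.notMem_erase v A) hr
  refine ⟨c', h1, fun a ha => h2 a (hmissu a ha), fun a ha => h3 a (hmiss _ _ hwu hwh ha), ?_, ?_⟩
  · intro x y hxu hyu
    rw [h4 x y hxu hyu, hc₁, insertEdge, if_neg]
    simp [hxu, hyu]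
  · intro x hx
    rw [Finset.mem_insert, not_or] at hx
    have hx' : x ∉ insert v (A.erase v) := by
      rw [Finset.insert_erase hvA]; exact hx.2
    have hne : s(u, x) ≠ s(u, h) := by simp [hx.1, huh.ne]
    rw [(h5 x hx').1, (h5 x hx').2, hc₁, insertEdge, insertEdge, Sym2.eq_swap (a := x), if_neg hne,
      if_neg hne]
    exact ⟨rfl, rfl⟩

/-- If a color is missing at `u` and at a vertex reached by the fan, the coloring extends. -/
theorem exists_coloring_of_common_missing [Finite V] (hτu : ∀ w, τ u w = 1)
    (hτu' : ∀ w, τ w u = 1) (hc : IsSignedColoring_s3 τ k (hole G u h) c) (huh : G.Adj u h) {w : V}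
    (hw : FanReach (hole G u h) c u F h w) {a : ℤ} (ha : IsColor k a)
    (hua : Misses_s3 (hole G u h) c u a) (hwa : Misses_s3 (hole G u h) c w a) :
    ∃ c', IsSignedColoring_s3 τ k G c' := by
  classical
  have := Fintype.ofFinite V
  obtain ⟨c', h1, h2, h3, -, -⟩ := exists_shift (F := F) hτu hτu' (Finset.univ.erase h) c h hc huh
    (Finset.notMem_erase _ _) (w := w) (Relation.ReflTransGen.mono
      (fun a b hs => ⟨Finset.mem_erase.2 ⟨(hole_adj_left.1 hs.1).2, Finset.mem_univ _⟩, hs⟩) _ _ hw)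
  exact ⟨_, h1.insertEdge (hτu w) (hτu' w) (fun x y e1 e2 => hole_adj.2 ⟨e1, e2⟩) ha
    (h2 a hua) (h3 a hwa)⟩

end Fan

section Extension

variable {V : Type*} {G H : SimpleGraph V} {c : V → V → ℤ} {α β : ℤ} {k : ℕ} {τ : V → V → ℤ}
  {u h : V}

theorem exchange_left : exchange α β α = β := if_pos rfl

theorem exchange_right : exchange α β β = α := by
  unfold exchange
  split_ifs <;> omega

theorem exchange_of_ne {d : ℤ} (h1 : d ≠ α) (h2 : d ≠ β) (h3 : d ≠ -α) (h4 : d ≠ -β) :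
    exchange α β d = d := by
  simp [exchange, h1, h2, h3, h4]

theorem kempe_reachable_left_iff_right {s : V × ℤ} {v : V} :
    (kempe H c α β).Reachable s (v, α) ↔ (kempe H c α β).Reachable s (v, β) := by
  rw [← kempe_reachable_exchange_right, exchange_left]

theorem kempeSwap_of_not_reachable {s : V × ℤ} {v w : V}
    (hr : ¬ (kempe H c α β).Reachable s (v, c v w)) : kempeSwap H c α β s v w = c v w :=
  if_neg hr

theorem kempeSwap_of_exchange_eq {s : V × ℤ} {v w : V} (he : exchange α β (c v w) = c v w) :
    kempeSwap H c α β s v w = c v w := by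
  unfold kempeSwap; split_ifs
  exacts [he, rfl]

theorem misses_kempeSwap_of_exchange_eq (hp : IsColorPair k α β) {s : V × ℤ} {v : V} {d : ℤ}
    (he : exchange α β d = d) :
    Misses_s3 H (kempeSwap H c α β s) v d ↔ Misses_s3 H c v d := by
  by_cases hr : (kempe H c α β).Reachable s (v, d)
  · rw [misses_kempeSwap_of_reachable hp hr, he]
  · rw [misses_kempeSwap_of_not_reachable hr]

theorem misses_kempeSwap_right (hp : IsColorPair k α β) {s : V × ℤ} {v : V}
    (hr : (kempe H c α β).Reachable s (v, α)) :
    Misses_s3 H (kempeSwap H c α β s) v β ↔ Misses_s3 H c v α := by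
  rw [misses_kempeSwap_of_reachable hp (kempe_reachable_left_iff_right.1 hr), exchange_right]

/-- The set of vertices reached by the fan from `h` that avoids `-β`. -/
def fanSet {V : Type*} (G : SimpleGraph V) (c : V → V → ℤ) (u h : V) (β : ℤ) : Set V :=
  {w | FanReach (hole G u h) c u {-β} h w}

/-- The first use of color `-α` in a fan splits off a vertex `p`, which is determined by `α`. -/
theorem fanSet_cases (hc : IsSignedColoring_s3 τ k (hole G u h) c) {v : V}
    (hv : v ∈ fanSet G c u h β) :
    FanReach (hole G u h) c u {-α, -β} h v ∨
      ∃ y p, FanReach (hole G u h) c u {-α, -β} h y ∧ FanStep (hole G u h) c u {-β} y p ∧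
        c u p = -α ∧ FanReach (hole G u h) c u {-α, -β} p v := by
  induction hv with
  | refl => exact Or.inl .refl
  | @tail b d _ hbd ih =>
    by_cases hd : c u d = -α
    · rcases ih with ih | ⟨y, p, hy, hyp, hp, -⟩
      · exact Or.inr ⟨b, d, ih, hbd, hd, .refl⟩
      · obtain rfl := hc.inj hyp.1 hbd.1 (hp.trans hd.symm)
        exact Or.inr ⟨y, p, hy, hyp, hp, .refl⟩
    · have hbd' : FanStep (hole G u h) c u {-α, -β} b d :=
        ⟨hbd.1, hbd.2.1, by simpa [hd] using hbd.2.2⟩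
      rcases ih with ih | ⟨y, p, hy, hyp, hp, hpb⟩
      · exact Or.inl (ih.tail hbd')
      · exact Or.inr ⟨y, p, hy, hyp, hp, hpb.tail hbd'⟩

variable [Finite V]

/-- In a coloring that does not extend, a fan vertex missing `α` that is reached without `-α`
lies on the Kempe chain of `u`. -/
theorem kempe_reachable_of_fanReach (hτ : ∀ v w, τ v w = 1 ∨ τ v w = -1)
    (hτu : ∀ w, τ u w = 1) (hτu' : ∀ w, τ w u = 1) (hno : ¬ ∃ c', IsSignedColoring_s3 τ k G c')
    (hc : IsSignedColoring_s3 τ k (hole G u h) c) (huh : G.Adj u h)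
    (hα : IsColor k α) (hβ : IsColor k β) (huβ : Misses_s3 (hole G u h) c u β) {v : V}
    (hv : FanReach (hole G u h) c u {-α, -β} h v) (hvα : Misses_s3 (hole G u h) c v α) :
    (kempe (hole G u h) c α β).Reachable (u, β) (v, α) := by
  have hp : IsColorPair k α β := ⟨hα, hβ, by
    rintro rfl
    exact hno (exists_coloring_of_common_missing hτu hτu' hc huh hv hα huβ hvα)⟩
  by_contra hnr
  replace hnr := mt Reachable.symm hnr
  set H := hole G u h with hH
  set c' := kempeSwap H c α β (v, α) with hc'
  have hcc : IsSignedColoring_s3 τ k H c' := hc.kempeSwap hτ hp (v, α)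
  have hfin : ∀ x, FanReach H c' u {-α, -β} h x → ¬ Misses_s3 H c' x β := fun x hx hxβ =>
    hno (exists_coloring_of_common_missing hτu hτu' hcc huh hx hβ
      ((misses_kempeSwap_of_not_reachable hnr).2 huβ) hxβ)
  have hall : ∀ x, FanReach H c u {-α, -β} h x → FanReach H c' u {-α, -β} h x := by
    intro x hx
    induction hx with
    | refl => exact .refl
    | @tail x y _ hxy ih =>
      obtain ⟨huy, hxm, hyF⟩ := hxy
      have hyβ : c u y ≠ β := huβ huy
      simp only [Set.mem_insert_iff, Set.mem_singleton_iff, not_or] at hyF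
      by_cases hyα : c u y = α
      · have hcy : c' u y = c u y := kempeSwap_of_not_reachable (by
          rw [hyα, kempe_reachable_left_iff_right]; exact hnr)
        refine ih.tail ⟨huy, ?_, by simp [hcy, hyF]⟩
        rw [hcy]
        rw [hyα] at hxm ⊢
        by_cases hxr : (kempe H c α β).Reachable (v, α) (x, α)
        · exact absurd ((misses_kempeSwap_right hp hxr).2 hxm) (hfin x ih)
        · exact (misses_kempeSwap_of_not_reachable hxr).2 hxm
      · have he := exchange_of_ne hyα hyβ hyF.1 hyF.2
        have hcy : c' u y = c u y := kempeSwap_of_exchange_eq he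
        refine ih.tail ⟨huy, ?_, by simp [hcy, hyF]⟩
        rw [hcy]
        exact (misses_kempeSwap_of_exchange_eq hp he).2 hxm
  exact hfin v (hall v hv) ((misses_kempeSwap_right hp (Reachable.refl _)).2 hvα)

/-- If the fan is as small as possible, no two of its vertices miss the same color `α`, provided
one of them is reached without `-α`. -/
theorem not_common_missing_of_fanReach (hτ : ∀ v w, τ v w = 1 ∨ τ v w = -1)
    (hτu : ∀ w, τ u w = 1) (hτu' : ∀ w, τ w u = 1) (hno : ¬ ∃ c', IsSignedColoring_s3 τ k G c')
    (hc : IsSignedColoring_s3 τ k (hole G u h) c) (huh : G.Adj u h)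
    (hβ : IsColor k β) (huβ : Misses_s3 (hole G u h) c u β)
    (hmin : ∀ c', IsSignedColoring_s3 τ k (hole G u h) c' → Misses_s3 (hole G u h) c' u β →
      (fanSet G c u h β).ncard ≤ (fanSet G c' u h β).ncard)
    (hα : IsColor k α) {v w : V} (hvw : v ≠ w)
    (hv : v ∈ fanSet G c u h β) (hvα : Misses_s3 (hole G u h) c v α)
    (hw : FanReach (hole G u h) c u {-α, -β} h w) (hwα : Misses_s3 (hole G u h) c w α) : False := by
  have hp : IsColorPair k α β := ⟨hα, hβ, by
    rintro rfl
    exact hno (exists_coloring_of_common_missing hτu hτu' hc huh hv hα huβ hvα)⟩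
  have hvu : v ≠ u := (hv.adj huh).ne'
  have hwu : w ≠ u := (hw.adj huh).ne'
  have hUW := kempe_reachable_of_fanReach hτ hτu hτu' hno hc huh hα hβ huβ hw hwα
  have hα0 : α ≠ 0 := hα.1
  set H := hole G u h with hH
  have hUV : ¬ (kempe H c α β).Reachable (u, β) (v, α) := fun hr =>
    kempe_not_three_ends hc hp (p := (u, β)) (q := (v, α)) (r := (w, α)) (by simp [hvu.symm])
      (by simp [hwu.symm]) (by simp [hvw]) hr hUW huβ hvα hwα hβ
  by_cases hneg : (kempe H c α β).Reachable (v, α) (u, -α)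
  · have hU : ¬ (kempe H c α β).Reachable (u, β) (u, -α) := fun hr => hUV (hr.trans hneg.symm)
    set c' := kempeSwap H c α β (u, β) with hc'
    have hcc : IsSignedColoring_s3 τ k H c' := hc.kempeSwap hτ hp _
    have hUα : (kempe H c α β).Reachable (u, β) (u, α) :=
      kempe_reachable_left_iff_right.2 (Reachable.refl _)
    have huα : Misses_s3 H c' u α := by
      rw [hc', misses_kempeSwap_of_reachable hp hUα, exchange_left]; exact huβ
    have hfin : ∀ x, FanReach H c' u ∅ h x → ¬ Misses_s3 H c' x α := fun x hx hxα =>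
      hno (exists_coloring_of_common_missing hτu hτu' hcc huh hx hα huα hxα)
    have hall : ∀ x, FanReach H c u {-β} h x → FanReach H c' u ∅ h x := by
      intro x hx
      induction hx with
      | refl => exact .refl
      | @tail x y hx hxy ih =>
        obtain ⟨huy, hxm, hyF⟩ := hxy
        refine ih.tail ⟨huy, ?_, Set.notMem_empty _⟩
        have hyβ : c u y ≠ β := huβ huy
        by_cases hyα : c u y = α
        · have hcy : c' u y = β := by
            rw [hc', kempeSwap, hyα, if_pos hUα, exchange_left]
          rw [hyα] at hxm
          rw [hcy]
          by_cases hxr : (kempe H c α β).Reachable (u, β) (x, α)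
          · exact (misses_kempeSwap_right hp hxr).2 hxm
          · exact absurd ((misses_kempeSwap_of_not_reachable hxr).2 hxm) (hfin x ih)
        by_cases hyα' : c u y = -α
        · have hcy : c' u y = -α := by
            rw [hc', kempeSwap_of_not_reachable (by rwa [hyα']), hyα']
          rw [hcy]
          rw [hyα'] at hxm
          refine (misses_kempeSwap_of_not_reachable fun hxr => ?_).2 hxm
          have hxu : x ≠ u := (FanReach.adj huh hx).ne'
          exact kempe_not_three_ends hc hp (p := (u, β)) (q := (w, α)) (r := (x, -α))
            (by simp [hwu.symm]) (by simp [hxu.symm]) (by simp; omega) hUW hxr huβ hwα hxm hβ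
        · have he := exchange_of_ne hyα hyβ hyα' hyF
          rw [hc', kempeSwap_of_exchange_eq he]
          exact (misses_kempeSwap_of_exchange_eq hp he).2 hxm
    exact hfin v (hall v hv) ((misses_kempeSwap_of_not_reachable hUV).2 hvα)
  · set c' := kempeSwap H c α β (v, α) with hc'
    have hcc : IsSignedColoring_s3 τ k H c' := hc.kempeSwap hτ hp _
    have hVU : ¬ (kempe H c α β).Reachable (v, α) (u, β) := mt Reachable.symm hUV
    have huβ' : Misses_s3 H c' u β := (misses_kempeSwap_of_not_reachable hVU).2 huβ
    have hcu : ∀ y, H.Adj u y → c' u y = c u y := by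
      intro y hy
      by_cases hyα : c u y = α
      · exact kempeSwap_of_not_reachable (by rwa [hyα, kempe_reachable_left_iff_right])
      by_cases hyα' : c u y = -α
      · exact kempeSwap_of_not_reachable (by rwa [hyα'])
      by_cases hyβ' : c u y = -β
      · refine kempeSwap_of_not_reachable ?_
        rw [hyβ', ← kempe_reachable_exchange_right, hp.exchange_neg, exchange_right]
        exact hneg
      · exact kempeSwap_of_exchange_eq (exchange_of_ne hyα (huβ hy) hyα' hyβ')
    have hvβ : Misses_s3 H c' v β := (misses_kempeSwap_right hp (Reachable.refl _)).2 hvα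
    have hvR : ¬ FanReach H c' u {-β} h v := fun hr =>
      hno (exists_coloring_of_common_missing hτu hτu' hcc huh hr hβ huβ' hvβ)
    have hsub : fanSet G c' u h β ⊆ fanSet G c u h β := by
      intro x hx
      induction hx with
      | refl => exact .refl
      | @tail x y _ hxy ih =>
        obtain ⟨huy, hxm, hyF⟩ := hxy
        rw [hcu y huy] at hxm hyF
        refine Relation.ReflTransGen.tail ih ⟨huy, ?_, hyF⟩
        by_cases hxr : (kempe H c α β).Reachable (v, α) (x, c u y)
        swap
        · exact (misses_kempeSwap_of_not_reachable hxr).1 hxm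
        have hxm' := (misses_kempeSwap_of_reachable hp hxr).1 hxm
        by_cases hyα : c u y = α
        · rw [hyα, exchange_left] at hxm'
          exact absurd (exists_coloring_of_common_missing hτu hτu' hc huh ih hβ huβ hxm') hno
        by_cases hyα' : c u y = -α
        · rw [hyα', hp.exchange_neg, exchange_left] at hxm'
          rw [hyα', ← kempe_reachable_exchange_right, hp.exchange_neg, exchange_left] at hxr
          refine absurd ?_ hvR
          have hαβ : α ≠ -β := fun e => huβ huy (by rw [hyα', e, neg_neg])
          have hall : ∀ z, FanReach H c u {-β} h z →
              FanReach H c' u {-β} h z ∨ FanReach H c' u {-β} h v := by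
            intro z hz
            induction hz with
            | refl => exact Or.inl .refl
            | @tail z t _ hzt ih =>
              obtain ⟨hut, hzm, htF⟩ := hzt
              rcases ih with ih | ih
              swap
              · exact Or.inr ih
              by_cases hzv : z = v
              · exact Or.inr (hzv ▸ ih)
              refine Or.inl (ih.tail ⟨hut, ?_, by rwa [hcu t hut]⟩)
              rw [hcu t hut]
              refine (misses_kempeSwap_of_not_reachable fun hzr => ?_).2 hzm
              refine kempe_not_three_ends hc hp (p := (v, α)) (q := (x, -β)) (r := (z, c u t))
                (by simp [hαβ]) (by simp [Ne.symm hzv]) ?_ hxr hzr hvα hxm' hzm hα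
              intro e
              exact htF (congrArg Prod.snd e).symm
          exact (hall v hv).elim id id
        · rwa [exchange_of_ne hyα (huβ huy) hyα' hyF] at hxm'
    have hlt : (fanSet G c' u h β).ncard < (fanSet G c u h β).ncard :=
      Set.ncard_lt_ncard ⟨hsub, fun hs => hvR (hs hv)⟩ (Set.toFinite _)
    exact absurd (hmin c' hcc huβ') (not_le.2 hlt)

/-- If the fan is as small as possible, no two of its vertices miss the same color. -/
theorem not_common_missing (hτ : ∀ v w, τ v w = 1 ∨ τ v w = -1)
    (hτu : ∀ w, τ u w = 1) (hτu' : ∀ w, τ w u = 1) (hno : ¬ ∃ c', IsSignedColoring_s3 τ k G c')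
    (hc : IsSignedColoring_s3 τ k (hole G u h) c) (huh : G.Adj u h)
    (hβ : IsColor k β) (huβ : Misses_s3 (hole G u h) c u β)
    (hmin : ∀ c', IsSignedColoring_s3 τ k (hole G u h) c' → Misses_s3 (hole G u h) c' u β →
      (fanSet G c u h β).ncard ≤ (fanSet G c' u h β).ncard)
    (hα : IsColor k α) {v w : V} (hvw : v ≠ w)
    (hv : v ∈ fanSet G c u h β) (hvα : Misses_s3 (hole G u h) c v α)
    (hw : w ∈ fanSet G c u h β) (hwα : Misses_s3 (hole G u h) c w α) : False := by
  classical
  have := Fintype.ofFinite V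
  by_cases hwQ : FanReach (hole G u h) c u {-α, -β} h w
  · exact not_common_missing_of_fanReach hτ hτu hτu' hno hc huh hβ huβ hmin hα hvw hv hvα hwQ hwα
  by_cases hvQ : FanReach (hole G u h) c u {-α, -β} h v
  · exact not_common_missing_of_fanReach hτ hτu hτu' hno hc huh hβ huβ hmin hα hvw.symm hw hwα
      hvQ hvα
  obtain ⟨y, p, hy, hyp, hpα, hpv⟩ := (fanSet_cases (α := α) hc hv).resolve_left hvQ
  obtain ⟨y', p', -, hyp', hpα', hpw⟩ := (fanSet_cases (α := α) hc hw).resolve_left hwQ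
  obtain rfl : p = p' := hc.inj hyp.1 hyp'.1 (hpα.trans hpα'.symm)
  have hp : IsColorPair k α β := ⟨hα, hβ, by
    rintro rfl
    exact hno (exists_coloring_of_common_missing hτu hτu' hc huh hv hα huβ hvα)⟩
  have hvu : v ≠ u := (FanReach.adj huh hv).ne'
  have hwu : w ≠ u := (FanReach.adj huh hw).ne'
  obtain ⟨hup, hph⟩ := hole_adj_left.1 hyp.1
  let A : Finset V := insert p
    ((Finset.univ.filter fun x => FanReach (hole G u h) c u {-α, -β} h x).erase h)
  have hAmem : ∀ x, ¬ FanReach (hole G u h) c u {-α, -β} h x → x ≠ p → x ∉ insert h A := by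
    intro x hx hxp
    have : x ≠ h := by rintro rfl; exact hx .refl
    simp [A, hx, hxp, this]
  have hyA : Relation.ReflTransGen
      (fun a b => b ∈ A ∧ FanStep (hole G u h) c u {-β} a b) h y := by
    clear hyp
    induction hy with
    | refl => exact .refl
    | @tail b d hb hbd ih =>
      refine ih.tail ⟨?_, hbd.1, hbd.2.1, fun hm => hbd.2.2 (Or.inr hm)⟩
      have hd : FanReach (hole G u h) c u {-α, -β} h d := Relation.ReflTransGen.tail hb hbd
      have : d ≠ h := (hole_adj_left.1 hbd.1).2
      simp [A, hd, this]
  obtain ⟨c', hcc, hmu, hmp, hoff, hin⟩ := exists_shift hτu hτu' A c h hc huh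
    (by simp [A, hph.symm]) (hyA.tail ⟨Finset.mem_insert_self _ _, hyp⟩)
  have hmiss : ∀ x a, ¬ FanReach (hole G u h) c u {-α, -β} h x → x ≠ u →
      Misses_s3 (hole G u h) c x a → Misses_s3 (hole G u p) c' x a := by
    intro x a hx hxu hxa
    by_cases hxp : x = p
    · subst hxp; exact hmp a hxa
    intro z hz
    have hxh : x ≠ h := by rintro rfl; exact hx .refl
    have hz' := (hole_adj_of_ne hxu hxh).2 (hole_adj.1 hz).1
    by_cases hzu : z = u
    · subst hzu
      rw [(hin x (hAmem x hx hxp)).2]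
      exact hxa hz'
    · rw [hoff x z hxu hzu]
      exact hxa hz'
  have hreach : ∀ t, ¬ FanReach (hole G u h) c u {-α, -β} h t → ∀ s,
      FanReach (hole G u h) c u {-α, -β} s t → FanReach (hole G u p) c' u {-α, -β} s t := by
    intro t ht s hst
    induction hst using Relation.ReflTransGen.head_induction_on with
    | refl => exact .refl
    | @head x y hxy hyt ih =>
      refine Relation.ReflTransGen.head ?_ ih
      obtain ⟨huy, hxm, hyF⟩ := hxy
      have hyQ : ¬ FanReach (hole G u h) c u {-α, -β} h y := fun hr => ht (hr.trans hyt)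
      have hxQ : ¬ FanReach (hole G u h) c u {-α, -β} h x := fun hr =>
        hyQ (Relation.ReflTransGen.tail hr ⟨huy, hxm, hyF⟩)
      have hyp : y ≠ p := by rintro rfl; exact hyF (Or.inl hpα)
      have hxu : x ≠ u := by rintro rfl; exact hxm huy rfl
      have hcy := (hin y (hAmem y hyQ hyp)).1
      refine ⟨hole_adj_left.2 ⟨(hole_adj_left.1 huy).1, hyp⟩, ?_, ?_⟩
      · rw [hcy]; exact hmiss x _ hxQ hxu hxm
      · rwa [hcy]
  have hvα' := hmiss v α hvQ hvu hvα
  have hwα' := hmiss w α hwQ hwu hwα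
  have hUV := kempe_reachable_of_fanReach hτ hτu hτu' hno hcc hup hα hβ (hmu β huβ)
    (hreach v hvQ p hpv) hvα'
  have hUW := kempe_reachable_of_fanReach hτ hτu hτu' hno hcc hup hα hβ (hmu β huβ)
    (hreach w hwQ p hpw) hwα'
  exact kempe_not_three_ends hcc hp (p := (u, β)) (q := (v, α)) (r := (w, α)) (by simp [hvu.symm])
    (by simp [hwu.symm]) (by simp [hvw]) hUV hUW (hmu β huβ) hvα' hwα' hβ

end Extension

section Counting

variable {V : Type*} {G H : SimpleGraph V} {c : V → V → ℤ} {k : ℕ} {τ : V → V → ℤ}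
  {u h : V}

open Classical in
/-- The colors missing at `w`. -/
noncomputable def missing (H : SimpleGraph V) (c : V → V → ℤ) (k : ℕ) (w : V) : Finset ℤ :=
  ((Finset.Icc (-(k : ℤ)) k).erase 0).filter fun a => Misses_s3 H c w a

theorem mem_missing {w : V} {a : ℤ} : a ∈ missing H c k w ↔ IsColor k a ∧ Misses_s3 H c w a := by
  simp only [missing, IsColor, Finset.mem_filter, Finset.mem_erase, Finset.mem_Icc]
  refine and_congr_left fun _ => and_congr_right fun _ => ?_
  omega

theorem hole_le : hole G u h ≤ G := fun _ _ hx => (hole_adj.1 hx).1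

/-- Switching a signed coloring at the vertices where `s` is `-1`. -/
theorem IsSignedColoring_s3.switch {s : V → ℤ} (hs : ∀ v, s v = 1 ∨ s v = -1)
    (hc : IsSignedColoring_s3 τ k H c) :
    IsSignedColoring_s3 (fun v w => s v * τ v w * s w) k H (fun v w => s v * c v w) where
  isColor v w hvw := (hc.isColor hvw).sign_mul (hs v)
  compat v w hvw := by
    have : s w * s w = 1 := by rcases hs w with e | e <;> simp [e]
    rw [hc.compat hvw]
    linear_combination (-(s v * τ v w * c w v)) * this
  inj v w x hvw hvx e := by
    refine hc.inj hvw hvx (mul_left_cancel₀ ?_ e)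
    rcases hs v with e | e <;> simp [e]

variable [Finite V]

theorem le_card_missing_add (w : V) :
    2 * k ≤ (missing H c k w).card + (H.neighborSet w).ncard := by
  classical
  have := Fintype.ofFinite V
  have hcard : ((Finset.Icc (-(k : ℤ)) k).erase 0).card = 2 * k := by
    rw [Finset.card_erase_of_mem (by simp), Int.card_Icc]
    omega
  have hsub : (Finset.Icc (-(k : ℤ)) k).erase 0 ⊆
      missing H c k w ∪ (H.neighborFinset w).image (c w) := by
    intro a ha
    by_cases hm : Misses_s3 H c w a
    · exact Finset.mem_union_left _ (Finset.mem_filter.2 ⟨ha, hm⟩)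
    · simp only [Misses_s3, not_forall, not_not] at hm
      obtain ⟨x, hx, rfl⟩ := hm
      exact Finset.mem_union_right _ (Finset.mem_image_of_mem _ ((H.mem_neighborFinset _ _).2 hx))
  rw [← hcard, Set.ncard_eq_toFinset_card']
  exact (Finset.card_le_card hsub).trans ((Finset.card_union_le _ _).trans
    (Nat.add_le_add_left Finset.card_image_le _))

theorem ncard_neighborSet_mono (hH : H ≤ G) (w : V) :
    (H.neighborSet w).ncard ≤ (G.neighborSet w).ncard :=
  Set.ncard_le_ncard (fun _ hx => hH hx) (Set.toFinite _)

theorem ncard_neighborSet_lt (hH : H ≤ G) {w x : V} (hG : G.Adj w x) (hn : ¬ H.Adj w x) :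
    (H.neighborSet w).ncard < (G.neighborSet w).ncard :=
  Set.ncard_lt_ncard ⟨fun _ hx => hH hx, fun hs => hn (hs hG)⟩ (Set.toFinite _)

/-- Extension across one edge `uh`, after switching so that all edges at `u` carry equal colors at
both ends. -/
theorem exists_coloring_of_hole_of_switched (hτ : ∀ v w, τ v w = 1 ∨ τ v w = -1)
    (hτu : ∀ w, τ u w = 1) (hτu' : ∀ w, τ w u = 1) (huh : G.Adj u h)
    (hu : (G.neighborSet u).ncard ≤ 2 * k)
    (hdeg : ∀ w, G.Adj u w → (G.neighborSet w).ncard < 2 * k)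
    (hc : ∃ c, IsSignedColoring_s3 τ k (hole G u h) c) : ∃ c, IsSignedColoring_s3 τ k G c := by
  classical
  have := Fintype.ofFinite V
  by_contra hno
  obtain ⟨c₀, hc₀⟩ := hc
  have hnuh : ¬ (hole G u h).Adj u h := fun e => (hole_adj_left.1 e).2 rfl
  obtain ⟨β, hβm⟩ : (missing (hole G u h) c₀ k u).Nonempty := by
    have h1 := le_card_missing_add (H := hole G u h) (c := c₀) (k := k) u
    have h2 := ncard_neighborSet_lt hole_le huh hnuh
    rw [← Finset.card_pos]; omega
  obtain ⟨hβ, huβ₀⟩ := mem_missing.1 hβm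
  obtain ⟨c, ⟨hc, huβ⟩, hmin⟩ := exists_minimalFor_of_wellFoundedLT
    (fun c => IsSignedColoring_s3 τ k (hole G u h) c ∧ Misses_s3 (hole G u h) c u β)
    (fun c => (fanSet G c u h β).ncard) ⟨c₀, hc₀, huβ₀⟩
  have hmin' : ∀ c', IsSignedColoring_s3 τ k (hole G u h) c' → Misses_s3 (hole G u h) c' u β →
      (fanSet G c u h β).ncard ≤ (fanSet G c' u h β).ncard := by
    intro c' h1 h2
    exact (le_total _ _).elim id fun hle => hmin ⟨h1, h2⟩ hle
  let R : Finset V := Finset.univ.filter fun w => w ∈ fanSet G c u h β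
  have hR : ∀ w, w ∈ R ↔ w ∈ fanSet G c u h β := fun w => by simp [R]
  have hhR : h ∈ R := (hR h).2 .refl
  have hdisj : (R : Set V).PairwiseDisjoint (missing (hole G u h) c k) := by
    intro v hv w hw hvw
    refine Finset.disjoint_left.2 fun a hav haw => ?_
    rw [mem_missing] at hav haw
    exact not_common_missing hτ hτu hτu' hno hc huh hβ huβ hmin' hav.1 hvw ((hR v).1 hv) hav.2
      ((hR w).1 hw) haw.2
  have hsub : R.biUnion (missing (hole G u h) c k) ⊆ insert (-β) ((R.erase h).image (c u)) := by
    intro a ha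
    obtain ⟨w, hw, haw⟩ := Finset.mem_biUnion.1 ha
    rw [hR] at hw
    rw [mem_missing] at haw
    by_cases haβ : a = -β
    · exact Finset.mem_insert.2 (Or.inl haβ)
    have hua : ¬ Misses_s3 (hole G u h) c u a := fun hua =>
      hno (exists_coloring_of_common_missing hτu hτu' hc huh hw haw.1 hua haw.2)
    simp only [Misses_s3, not_forall, not_not] at hua
    obtain ⟨x, hx, rfl⟩ := hua
    refine Finset.mem_insert_of_mem (Finset.mem_image_of_mem _ (Finset.mem_erase.2
      ⟨(hole_adj_left.1 hx).2, (hR x).2 (Relation.ReflTransGen.tail hw ⟨hx, haw.2, haβ⟩)⟩))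
  have hcard : (R.biUnion (missing (hole G u h) c k)).card ≤ R.card := by
    have h1 := Finset.card_le_card hsub
    have h2 := Finset.card_insert_le (-β) ((R.erase h).image (c u))
    have h3 := Finset.card_image_le (s := R.erase h) (f := c u)
    have h4 := Finset.card_erase_add_one hhR
    omega
  rw [Finset.card_biUnion hdisj] at hcard
  have hlt : ∑ w ∈ R, 1 < ∑ w ∈ R, (missing (hole G u h) c k w).card := by
    refine Finset.sum_lt_sum (fun w hw => ?_) ⟨h, hhR, ?_⟩
    · have h1 := le_card_missing_add (H := hole G u h) (c := c) (k := k) w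
      have h2 := ncard_neighborSet_mono (hole_le (G := G) (u := u) (h := h)) w
      have h3 := hdeg w (FanReach.adj huh ((hR w).1 hw))
      omega
    · have h1 := le_card_missing_add (H := hole G u h) (c := c) (k := k) h
      have h2 := ncard_neighborSet_lt hole_le huh.symm fun e => hnuh e.symm
      have h3 := hdeg h huh
      omega
  rw [← Finset.card_eq_sum_ones] at hlt
  omega

theorem exists_coloring_of_hole (hτ : ∀ v w, τ v w = 1 ∨ τ v w = -1)
    (hsymm : ∀ v w, τ v w = τ w v) (hdiag : ∀ v, τ v v = 1) (huh : G.Adj u h)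
    (hu : (G.neighborSet u).ncard ≤ 2 * k)
    (hdeg : ∀ w, G.Adj u w → (G.neighborSet w).ncard < 2 * k)
    (hc : ∃ c, IsSignedColoring_s3 τ k (hole G u h) c) : ∃ c, IsSignedColoring_s3 τ k G c := by
  have hsq : ∀ v w, τ v w * τ v w = 1 := fun v w => by rcases hτ v w with e | e <;> simp [e]
  obtain ⟨c, hc⟩ := hc
  obtain ⟨c', hc'⟩ := exists_coloring_of_hole_of_switched
    (τ := fun v w => τ u v * τ v w * τ u w) (k := k) (G := G) (u := u) (h := h)
    (fun v w => by
      rcases hτ u v with e1 | e1 <;> rcases hτ v w with e2 | e2 <;> rcases hτ u w with e3 | e3 <;>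
        simp [e1, e2, e3])
    (fun w => by simp [hdiag, hsq]) (fun w => by simp [hdiag, hsymm w u, hsq]) huh hu hdeg
    ⟨_, hc.switch (hτ u)⟩
  refine ⟨_, (?_ : (fun v w => τ u v * (τ u v * τ v w * τ u w) * τ u w) = τ) ▸
    hc'.switch (hτ u)⟩
  funext v w
  linear_combination (τ v w * (τ u w * τ u w)) * hsq u v + τ v w * hsq u w

/-- A signed graph of maximum degree at most `2 * k` whose vertices of degree `2 * k` are
independent has a proper coloring with the colors `±1, …, ±k`. -/
theorem exists_zeroFree_coloring (hτ : ∀ v w, τ v w = 1 ∨ τ v w = -1)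
    (hsymm : ∀ v w, τ v w = τ w v) (hdiag : ∀ v, τ v v = 1) (G : SimpleGraph V)
    (hdeg : ∀ v, (G.neighborSet v).ncard ≤ 2 * k)
    (hind : ∀ v w, G.Adj v w →
      (G.neighborSet v).ncard < 2 * k ∨ (G.neighborSet w).ncard < 2 * k) :
    ∃ c, IsSignedColoring_s3 τ k G c := by
  induction G using WellFoundedLT.induction with
  | ind G ih =>
  by_cases hG : ∃ a b, G.Adj a b
  swap
  · push Not at hG
    exact ⟨0, fun _ _ e => absurd e (hG _ _), fun _ _ e => absurd e (hG _ _),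
      fun _ _ _ e => absurd e (hG _ _)⟩
  obtain ⟨a, b, hab⟩ := hG
  obtain ⟨u, h, huh, hu⟩ : ∃ u h, G.Adj u h ∧
      ∀ w, G.Adj u w → (G.neighborSet w).ncard < 2 * k := by
    by_cases hfull : ∃ v, (G.neighborSet v).ncard = 2 * k
    · obtain ⟨v, hv⟩ := hfull
      have hpos : 0 < (G.neighborSet a).ncard := (Set.ncard_pos (Set.toFinite _)).2 ⟨b, hab⟩
      have := hdeg a
      obtain ⟨h, hh⟩ : (G.neighborSet v).Nonempty :=
        (Set.ncard_pos (Set.toFinite _)).1 (by omega)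
      exact ⟨v, h, hh, fun w hw => (hind v w hw).resolve_left (by omega)⟩
    · push Not at hfull
      exact ⟨a, b, hab, fun w _ => lt_of_le_of_ne (hdeg w) (hfull w)⟩
  refine exists_coloring_of_hole hτ hsymm hdiag huh (hdeg u) hu (ih (hole G u h) ?_ ?_ ?_)
  · exact lt_of_le_of_ne hole_le fun e =>
      (hole_adj_left.1 (e.symm ▸ huh : (hole G u h).Adj u h)).2 rfl
  · exact fun v => (ncard_neighborSet_mono hole_le v).trans (hdeg v)
  · exact fun v w hvw => (hind v w (hole_le hvw)).imp (ncard_neighborSet_mono hole_le v).trans_lt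
      (ncard_neighborSet_mono hole_le w).trans_lt

/-- A maximal matching covers an endpoint of every edge. -/
theorem exists_maximal_matching (G : SimpleGraph V) :
    ∃ M ≤ G, (∀ v w x, M.Adj v w → M.Adj v x → w = x) ∧
      ∀ v w, G.Adj v w → (∃ x, M.Adj v x) ∨ ∃ x, M.Adj w x := by
  obtain ⟨M, ⟨hMG, hM⟩, hmax⟩ := Set.Finite.exists_maximal
    (s := {M : SimpleGraph V | M ≤ G ∧ ∀ v w x, M.Adj v w → M.Adj v x → w = x})
    (Set.toFinite _) ⟨⊥, bot_le, fun _ _ _ e => e.elim⟩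
  refine ⟨M, hMG, hM, fun v w hvw => ?_⟩
  by_contra hcov
  push Not at hcov
  have hle : M ⊔ SimpleGraph.edge v w ≤ M := by
    refine hmax ⟨sup_le hMG ((SimpleGraph.edge_le_iff G).2 (Or.inr hvw)), ?_⟩ le_sup_left
    intro a b d hab had
    simp only [SimpleGraph.sup_adj, SimpleGraph.edge_adj] at hab had
    grind [SimpleGraph.adj_comm]
  exact hcov.1 w (hle (Or.inr ((SimpleGraph.edge_adj v w v w).2 ⟨Or.inl ⟨rfl, rfl⟩, hvw.ne⟩)))

end Counting

/-- If `Δ(Σ)` is even then `χ'(Σ) ≤ Δ(Σ) + 1`. -/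
theorem chromaticIndex_le_of_even_maxDegree {V : Type*} [Fintype V] (G : SimpleGraph V)
    [DecidableRel G.Adj] (σ : Sym2 V → ℤ)
    (hσ : ∀ e ∈ G.edgeSet, σ e = 1 ∨ σ e = -1)
    (hΔ : Even G.maxDegree) :
    ∃ n ≤ G.maxDegree + 1, ∃ c : SColoring G σ n, c.Proper := by
  classical
  obtain ⟨k, hk⟩ := hΔ
  obtain ⟨M, hMG, hM, hcov⟩ := exists_maximal_matching G
  have hdeg : ∀ v, (G.neighborSet v).ncard ≤ 2 * k := by
    intro v
    have := G.degree_le_maxDegree v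
    rw [Set.ncard_eq_toFinset_card']
    change G.degree v ≤ _
    omega
  let τ : V → V → ℤ := fun v w => if G.Adj v w then -σ s(v, w) else 1
  obtain ⟨c, hc⟩ := exists_zeroFree_coloring (τ := τ) (k := k)
    (fun v w => by
      simp only [τ]
      split_ifs with hvw
      · rcases hσ s(v, w) hvw with e | e <;> simp [e]
      · exact Or.inl rfl)
    (fun v w => by simp only [τ, G.adj_comm v w, Sym2.eq_swap (a := v)])
    (fun v => by simp [τ]) (G \ M)
    (fun v => (ncard_neighborSet_mono sdiff_le v).trans (hdeg v))
    (fun v w hvw => by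
      have key : ∀ a, (∃ x, M.Adj a x) → ((G \ M).neighborSet a).ncard < 2 * k :=
        fun a ⟨x, hx⟩ => (ncard_neighborSet_lt sdiff_le (hMG hx) fun e => e.2 hx).trans_le (hdeg a)
      exact (hcov v w hvw.1).imp (key v) (key w))
  let col : V → V → ℤ := fun v w => if M.Adj v w then 0 else c v w
  let γ : V → Sym2 V → ℤ := fun v e => if hv : v ∈ e then col v (Sym2.Mem.other hv) else 0
  have hγ : ∀ v w, γ v s(v, w) = col v w := by
    intro v w
    have hv : v ∈ s(v, w) := Sym2.mem_mk_left v w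
    simp only [γ, dif_pos hv]
    rw [Sym2.congr_right.1 (Sym2.other_spec hv)]
  have hγ' : ∀ v w, γ w s(v, w) = col w v := fun v w => by rw [Sym2.eq_swap, hγ]
  refine ⟨2 * k + 1, by omega, ⟨γ, ?_, ?_⟩, ?_⟩
  · intro v w hvw
    rw [hγ]
    simp only [col, Mset, Set.mem_ofPred_eq]
    split_ifs with hm
    · exact ⟨by simp, fun _ => odd_two_mul_add_one k⟩
    · obtain ⟨h1, h2⟩ := hc.isColor (v := v) (w := w) ⟨hvw, hm⟩
      exact ⟨by omega, fun e => absurd e h1⟩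
  · intro v w hvw
    rw [hγ, hγ']
    simp only [col, M.adj_comm w v]
    split_ifs with hm
    · simp
    · rw [hc.compat (v := v) (w := w) ⟨hvw, hm⟩]
      simp [τ, hvw]
  · intro v w x hvw hvx hwx
    change γ v s(v, w) ≠ γ v s(v, x)
    rw [hγ, hγ]
    simp only [col]
    split_ifs with h1 h2 h2
    · exact absurd (hM v w x h1 h2) hwx
    · exact ((hc.isColor (v := v) (w := x) ⟨hvx, h2⟩).1).symm
    · exact (hc.isColor (v := v) (w := w) ⟨hvw, h1⟩).1
    · exact fun e => hwx (hc.inj ⟨hvw, h1⟩ ⟨hvx, h2⟩ e)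
end

section
/- If every edge of the signed graph Σ = (Γ, σ) is negative, then every a/b-Kempe chain with respect to a proper n-edge coloring of Σ is a path, i.e., the trail K_{a,b}(v₀, v_m) has no repeated vertices. -/
open SimpleGraph

/-- The defining properties of an `a/b`-Kempe trail of the coloring `c` starting at the
vertex `v₀` (where `a` is absent at `v₀` and the chain starts with a `b`-colored edge):
it is a trail whose edge-color magnitudes alternate `|b|, |a|, |b|, …`, and at each
interior vertex `v i` the two incident chain edges are colored `(-1)^{t_i}·a` and
`(-1)^{t_i}·b`, where `t_i` is the number of positive edges among the first `i` edges
of the trail. -/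
def IsKempeTrail {V : Type*} {G : SimpleGraph V} {σ : Sym2 V → ℤ} {n : ℕ}
    (c : SColoring G σ n) (a b : ℤ) {v₀ vm : V} (W : G.Walk v₀ vm) : Prop :=
  W.IsTrail ∧
  c.Absent a v₀ ∧
  (0 < W.length → c.col v₀ s(v₀, W.getVert 1) = b) ∧
  (∀ i < W.length,
    (c.col (W.getVert i) s(W.getVert i, W.getVert (i + 1))).natAbs =
      if Even i then b.natAbs else a.natAbs) ∧
  (∀ i, 0 < i → i < W.length →
    ({c.col (W.getVert i) s(W.getVert (i - 1), W.getVert i),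
      c.col (W.getVert i) s(W.getVert i, W.getVert (i + 1))} : Set ℤ) =
    {(-1) ^ ((W.edges.take i).countP fun e => σ e == 1) * a,
     (-1) ^ ((W.edges.take i).countP fun e => σ e == 1) * b})

/-- The `a/b`-Kempe chain `K_{a,b}(v₀, vm)`: a *maximal* `a/b`-Kempe trail. -/
def IsKempeChain {V : Type*} {G : SimpleGraph V} {σ : Sym2 V → ℤ} {n : ℕ}
    (c : SColoring G σ n) (a b : ℤ) {v₀ vm : V} (W : G.Walk v₀ vm) : Prop :=
  IsKempeTrail c a b W ∧
    ∀ ⦃x : V⦄ (h : G.Adj vm x), ¬IsKempeTrail c a b (W.concat h)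

namespace SimpleGraph.Walk

variable {V : Type*} {G : SimpleGraph V} {u v : V}

/-- The edges of a walk, in order, join its consecutive vertices. -/
theorem edges_eq_map_getVert (W : G.Walk u v) :
    W.edges = (List.range W.length).map fun i => s(W.getVert i, W.getVert (i + 1)) := by
  induction W with
  | nil => simp
  | cons h p ih =>
    simp [List.range_succ_eq_map, ih, Function.comp_def]

/-- Distinct steps of a trail traverse distinct edges. -/
theorem IsTrail.eq_of_step_eq {W : G.Walk u v} (hW : W.IsTrail) {i j : ℕ}
    (hi : i < W.length) (hj : j < W.length)
    (h : s(W.getVert i, W.getVert (i + 1)) = s(W.getVert j, W.getVert (j + 1))) : i = j := by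
  have hnd := hW.edges_nodup
  rw [edges_eq_map_getVert] at hnd
  exact List.inj_on_of_nodup_map hnd (List.mem_range.2 hi) (List.mem_range.2 hj) h

end SimpleGraph.Walk

namespace SColoring

variable {V : Type*} {G : SimpleGraph V} {σ : Sym2 V → ℤ} {n : ℕ}

/-- A negative edge has the same color at both of its endpoints. -/
theorem col_eq_of_neg (c : SColoring G σ n) (hneg : ∀ e ∈ G.edgeSet, σ e = -1) {v w : V}
    (h : G.Adj v w) : c.col v s(v, w) = c.col w s(v, w) := by
  have := c.compat h
  rwa [hneg _ (G.mem_edgeSet.2 h), neg_neg, one_mul] at this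

/-- In a proper coloring, an edge at a vertex is determined by its color there. -/
theorem Proper.edge_eq {c : SColoring G σ n} (hc : c.Proper) {v : V} {e f : Sym2 V}
    (he : e ∈ G.edgeSet) (hf : f ∈ G.edgeSet) (hve : v ∈ e) (hvf : v ∈ f)
    (h : c.col v e = c.col v f) : e = f := by
  obtain ⟨w, rfl⟩ := hve
  obtain ⟨x, rfl⟩ := hvf
  by_contra hne
  exact hc he hf (fun hwx => hne (congrArg (fun y => s(v, y)) hwx)) h

end SColoring

/-- If all edges are negative, the edges of a Kempe trail are colored alternately `b` and `a`. -/
theorem IsKempeTrail.col_getVert {V : Type*} {G : SimpleGraph V} {σ : Sym2 V → ℤ} {n : ℕ}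
    {c : SColoring G σ n} {a b : ℤ} {v₀ vm : V} {W : G.Walk v₀ vm}
    (hW : IsKempeTrail c a b W) (hneg : ∀ e ∈ G.edgeSet, σ e = -1) {i : ℕ} (hi : i < W.length) :
    c.col (W.getVert i) s(W.getVert i, W.getVert (i + 1)) = if Even i then b else a := by
  obtain ⟨-, -, hfirst, -, hpair⟩ := hW
  induction i with
  | zero => simpa using hfirst hi
  | succ i ih =>
    have hprev := ih (by omega)
    rw [c.col_eq_of_neg hneg (W.adj_getVert_succ (by omega))] at hprev
    have hcount : (W.edges.take (i + 1)).countP (fun e => σ e == 1) = 0 := by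
      rw [List.countP_eq_zero]
      intro e he
      simp [hneg e (W.edges_subset_edgeSet (List.mem_of_mem_take he))]
    have hp := hpair (i + 1) (by omega) hi
    rw [hcount, Nat.add_sub_cancel, hprev, pow_zero, one_mul, one_mul, Set.pair_eq_pair_iff] at hp
    grind

/-- If every edge of `Σ` is negative, then every `a/b`-Kempe chain of a proper
`n`-edge coloring of `Σ` is a path: it has no repeated vertices. -/
theorem kempeChain_isPath_of_all_negative {V : Type*} [Fintype V] (G : SimpleGraph V)
    (σ : Sym2 V → ℤ) (hneg : ∀ e ∈ G.edgeSet, σ e = -1)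
    (n : ℕ) (c : SColoring G σ n) (hc : c.Proper)
    (a b : ℤ) (ha : a ∈ Mset n) (hb : b ∈ Mset n) {v₀ vm : V}
    (hbpres : ∃ w : V, G.Adj v₀ w ∧ c.col v₀ s(v₀, w) = b)
    (W : G.Walk v₀ vm) (hW : IsKempeChain c a b W) :
    W.support.Nodup := by
  have hT := hW.1
  have hadj {i : ℕ} (hi : i < W.length) : G.Adj (W.getVert i) (W.getVert (i + 1)) :=
    W.adj_getVert_succ hi
  have hout {i : ℕ} (hi : i < W.length) := hT.col_getVert hneg hi
  have hin {i : ℕ} (hi : i < W.length) :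
      c.col (W.getVert (i + 1)) s(W.getVert i, W.getVert (i + 1)) = if Even i then b else a :=
    (c.col_eq_of_neg hneg (hadj hi)).symm.trans (hout hi)
  have hrep {i j : ℕ} (hij : i < j + 1) (hj : j < W.length) :
      W.getVert i ≠ W.getVert (j + 1) := by
    intro h
    have hj' := (congrArg (fun v => c.col v s(W.getVert j, W.getVert (j + 1))) h).trans (hin hj)
    have hmem : W.getVert i ∈ s(W.getVert j, W.getVert (j + 1)) := by simp [h]
    have hi : i < W.length := by omega
    have hcol_i : c.col (W.getVert i) s(W.getVert i, W.getVert (i + 1)) ≠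
        c.col (W.getVert i) s(W.getVert j, W.getVert (j + 1)) := by
      intro heq
      have := hT.1.eq_of_step_eq hi hj
        (hc.edge_eq (hadj hi) (hadj hj) (Sym2.mem_mk_left _ _) hmem heq)
      subst this
      exact (hadj hi).ne h
    rw [hout hi, hj'] at hcol_i
    cases i with
    | zero =>
      have habs := hT.2.1 (w := W.getVert j) (by
        have := (hadj hj).symm
        rwa [← h, W.getVert_zero] at this)
      rw [← h, Sym2.eq_swap, W.getVert_zero] at hj'
      split_ifs at hj' hcol_i <;> simp_all
    | succ k =>
      have hk : k < W.length := by omega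
      have hcol_k : c.col (W.getVert (k + 1)) s(W.getVert k, W.getVert (k + 1)) ≠
          c.col (W.getVert (k + 1)) s(W.getVert j, W.getVert (j + 1)) := by
        intro heq
        have := hT.1.eq_of_step_eq hk hj
          (hc.edge_eq (hadj hk) (hadj hj) (Sym2.mem_mk_right _ _) hmem heq)
        omega
      rw [hin hk, hj'] at hcol_k
      grind
  rw [← SimpleGraph.Walk.isPath_def, ← SimpleGraph.Walk.IsPath.getVert_injOn_iff]
  intro i hi j hj h
  simp only [Set.mem_ofPred_eq] at hi hj
  by_contra hne
  rcases Nat.lt_or_gt_of_ne hne with hlt | hlt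
  · obtain ⟨j, rfl⟩ := Nat.exists_eq_add_one_of_ne_zero (by omega : j ≠ 0)
    exact hrep hlt (by omega) h
  · obtain ⟨i, rfl⟩ := Nat.exists_eq_add_one_of_ne_zero (by omega : i ≠ 0)
    exact hrep hlt (by omega) h.symm
end

section
/- Let Γ be a finite connected 3-regular simple graph with no isthmus (no cut-edge/bridge). Then there exists a signature σ : E(Γ) → {+1, −1} such that the signed graph (Γ, σ) admits a proper 3-edge coloring (using colors from M₃ = {−1, 0, +1}). -/
open SimpleGraph

namespace SimpleGraph

variable {V : Type*} [Fintype V] (G : SimpleGraph V)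

open Classical in
/-- The arcs `(x, y)` of `G` leaving the vertex set `S`. -/
noncomputable def boundaryArcs (S : Finset V) : Finset (V × V) :=
  {p | p.1 ∈ S ∧ p.2 ∉ S ∧ G.Adj p.1 p.2}

variable {G}

lemma mem_boundaryArcs {S : Finset V} {p : V × V} :
    p ∈ G.boundaryArcs S ↔ p.1 ∈ S ∧ p.2 ∉ S ∧ G.Adj p.1 p.2 := by
  simp [boundaryArcs]

open Classical in
lemma even_card_inner_arcs (S : Finset V) :
    Even (Finset.card {p : V × V | p.1 ∈ S ∧ p.2 ∈ S ∧ G.Adj p.1 p.2}) := by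
  let H : SimpleGraph V :=
    { Adj := fun x y ↦ x ∈ S ∧ y ∈ S ∧ G.Adj x y
      symm := ⟨fun _ _ h ↦ ⟨h.2.1, h.1, h.2.2.symm⟩⟩
      loopless := ⟨fun _ h ↦ G.irrefl h.2.2⟩ }
  have h := H.two_mul_card_edgeFinset
  exact ⟨H.edgeFinset.card, by rw [← two_mul, h]⟩

lemma odd_card_boundaryArcs [DecidableRel G.Adj] {d : ℕ} (hd : Odd d)
    (hreg : G.IsRegularOfDegree d) {S : Finset V} (hS : Odd S.card) :
    Odd (G.boundaryArcs S).card := by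
  classical
  have htotal : Finset.card {p : V × V | p.1 ∈ S ∧ G.Adj p.1 p.2} = S.card * d := by
    rw [Finset.card_eq_sum_card_fiberwise (f := Prod.fst) (t := S) (by intro p; simp +contextual),
      Finset.sum_const_nat]
    intro x hx
    rw [← hreg x, ← card_neighborFinset_eq_degree]
    refine Finset.card_bij' (fun p _ ↦ p.2) (fun y _ ↦ (x, y)) ?_ ?_ ?_ ?_ <;> aesop
  have hsplit : Finset.card {p : V × V | p.1 ∈ S ∧ G.Adj p.1 p.2} =
      Finset.card {p : V × V | p.1 ∈ S ∧ p.2 ∈ S ∧ G.Adj p.1 p.2} + (G.boundaryArcs S).card := by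
    rw [← Finset.card_union_of_disjoint]
    · congr 1
      ext p
      simp only [Finset.mem_union, Finset.mem_filter, Finset.mem_univ, true_and, mem_boundaryArcs]
      tauto
    · rw [Finset.disjoint_left]
      intro p hp hp'
      rw [mem_boundaryArcs] at hp'
      simp only [Finset.mem_filter] at hp
      exact hp'.2.1 hp.2.2.1
  have hodd := hS.mul hd
  rw [← htotal, hsplit] at hodd
  have heven := even_card_inner_arcs (G := G) S
  grind

lemma card_boundaryArcs_ne_one (hbridge : ∀ e ∈ G.edgeSet, ¬G.IsBridge e) (S : Finset V) :
    (G.boundaryArcs S).card ≠ 1 := by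
  intro h
  obtain ⟨⟨x, y⟩, hxy⟩ := Finset.card_eq_one.mp h
  obtain ⟨hx, hy, hadj⟩ := mem_boundaryArcs.mp (hxy ▸ Finset.mem_singleton_self (x, y))
  refine hbridge s(x, y) hadj (isBridge_iff.mpr fun ⟨p⟩ ↦ ?_)
  obtain ⟨d, -, hd₁, hd₂⟩ := p.exists_boundary_dart (S : Set V) hx hy
  have hd := d.adj
  rw [deleteEdges_adj] at hd
  have hmem : (d.fst, d.snd) ∈ G.boundaryArcs S := mem_boundaryArcs.mpr ⟨hd₁, hd₂, hd.1⟩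
  rw [hxy, Finset.mem_singleton, Prod.mk.injEq] at hmem
  exact hd.2 (by rw [hmem.1, hmem.2]; rfl)

lemma three_le_card_boundaryArcs [DecidableRel G.Adj] (hreg : G.IsRegularOfDegree 3)
    (hbridge : ∀ e ∈ G.edgeSet, ¬G.IsBridge e) {S : Finset V} (hS : Odd S.card) :
    3 ≤ (G.boundaryArcs S).card := by
  have hodd := odd_card_boundaryArcs (by decide) hreg hS
  have hne := card_boundaryArcs_ne_one hbridge S
  grind

/-- **Petersen's theorem**: a bridgeless cubic graph has a perfect matching. -/
theorem exists_isPerfectMatching_of_cubic [DecidableRel G.Adj] (hreg : G.IsRegularOfDegree 3)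
    (hbridge : ∀ e ∈ G.edgeSet, ¬G.IsBridge e) : ∃ M : G.Subgraph, M.IsPerfectMatching := by
  classical
  refine tutte.mpr fun u hu ↦ hu.not_ge ?_
  set H := ((⊤ : G.Subgraph).deleteVerts u).coe
  let support (C : H.ConnectedComponent) : Finset V := (Subtype.val '' C.supp).toFinset
  have hcut (C) {p} (hp : p ∈ G.boundaryArcs (support C)) :
      ∃ h : p.1 ∈ ((⊤ : G.Subgraph).deleteVerts u).verts,
        H.connectedComponentMk ⟨p.1, h⟩ = C ∧ p.2 ∈ u ∧ G.Adj p.1 p.2 := by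
    obtain ⟨h₁, h₂, hadj⟩ := mem_boundaryArcs.mp hp
    simp only [support, Set.mem_toFinset] at h₁ h₂
    obtain ⟨x, hx, hxp⟩ := h₁
    refine ⟨hxp ▸ x.2, ?_, ?_, hadj⟩
    · rw [← ConnectedComponent.mem_supp_iff]
      convert hx
      exact hxp.symm
    · by_contra hpu
      have hy : p.2 ∈ ((⊤ : G.Subgraph).deleteVerts u).verts := by simpa using hpu
      have hxu : p.1 ∉ u := hxp ▸ x.2.2
      refine h₂ ⟨⟨p.2, hy⟩, C.mem_supp_of_adj_mem_supp hx ?_, rfl⟩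
      simp [H, hxu, hpu, hxp, hadj]
  have hdisj : (H.oddComponents.toFinset : Set H.ConnectedComponent).PairwiseDisjoint
      fun C ↦ G.boundaryArcs (support C) := by
    intro C _ D _ hCD
    refine Finset.disjoint_left.mpr fun p hpC hpD ↦ hCD ?_
    obtain ⟨_, hC, -⟩ := hcut C hpC
    obtain ⟨_, hD, -⟩ := hcut D hpD
    exact hC.symm.trans hD
  have hlower : H.oddComponents.toFinset.card * 3 ≤
      (H.oddComponents.toFinset.biUnion fun C ↦ G.boundaryArcs (support C)).card := by
    rw [Finset.card_biUnion hdisj, ← smul_eq_mul]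
    refine Finset.card_nsmul_le_sum _ _ _ fun C hC ↦ three_le_card_boundaryArcs hreg hbridge ?_
    rw [← Set.ncard_eq_toFinset_card', Set.ncard_image_of_injective _ Subtype.val_injective]
    simpa using hC
  have hupper : (H.oddComponents.toFinset.biUnion fun C ↦ G.boundaryArcs (support C)).card ≤
      3 * u.toFinset.card := by
    have hmem {p} (hp : p ∈ H.oddComponents.toFinset.biUnion
        fun C ↦ G.boundaryArcs (support C)) : p.2 ∈ u ∧ G.Adj p.1 p.2 := by
      obtain ⟨C, -, hC⟩ := Finset.mem_biUnion.mp hp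
      obtain ⟨_, -, h⟩ := hcut C hC
      exact h
    generalize H.oddComponents.toFinset.biUnion (fun C ↦ G.boundaryArcs (support C)) = B at hmem ⊢
    refine Finset.card_le_mul_card_image_of_maps_to (f := Prod.snd)
      (fun p hp ↦ Set.mem_toFinset.mpr (hmem hp).1) 3 fun y _ ↦ ?_
    refine (Finset.card_le_card_of_injOn (t := G.neighborFinset y) Prod.fst ?_ ?_).trans_eq
      ((G.card_neighborFinset_eq_degree y).trans (hreg y))
    · intro p hp
      obtain ⟨hpB, rfl⟩ := Finset.mem_filter.mp (Finset.mem_coe.mp hp)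
      simpa using (hmem hpB).2.symm
    · intro p hp q hq hpq
      have hp := (Finset.mem_filter.mp (Finset.mem_coe.mp hp)).2
      have hq := (Finset.mem_filter.mp (Finset.mem_coe.mp hq)).2
      exact Prod.ext hpq (hp.trans hq.symm)
  rw [Set.ncard_eq_toFinset_card', Set.ncard_eq_toFinset_card']
  lia

end SimpleGraph

/-- A perfect matching of a cubic graph yields a signature and a proper `3`-edge coloring in which
the matching is the set of edges colored `0`. -/
theorem SimpleGraph.Subgraph.IsPerfectMatching.exists_signature_coloring {V : Type*} [Fintype V]
    {G : SimpleGraph V} [DecidableRel G.Adj] (hreg : G.IsRegularOfDegree 3) {M : G.Subgraph}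
    (hM : M.IsPerfectMatching) :
    ∃ σ : Sym2 V → ℤ, (∀ e ∈ G.edgeSet, σ e = 1 ∨ σ e = -1) ∧
      ∃ c : SColoring G σ 3, c.Proper := by
  classical
  have hsplit (v : V) : ∃ a, ∀ w x, G.Adj v w → G.Adj v x → ¬M.Adj v w → ¬M.Adj v x → w ≠ x →
      ¬(w = a ↔ x = a) := by
    obtain ⟨m, hm, -⟩ := hM.1 (hM.2 v)
    have hcard : ((G.neighborFinset v).erase m).card = 2 := by
      rw [Finset.card_erase_of_mem (by simpa using hm.adj_sub), card_neighborFinset_eq_degree,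
        hreg v]
    obtain ⟨a, b, hab, hnbr⟩ := Finset.card_eq_two.mp hcard
    have hmem (w : V) (hw : G.Adj v w) (hwM : ¬M.Adj v w) : w = a ∨ w = b := by
      have hwm : w ∈ (G.neighborFinset v).erase m :=
        Finset.mem_erase.mpr ⟨fun h ↦ hwM (h ▸ hm), by simpa using hw⟩
      simpa [hnbr] using hwm
    refine ⟨a, fun w x hw hx hwM hxM hwx ↦ ?_⟩
    have := hmem w hw hwM
    have := hmem x hx hxM
    grind
  choose a ha using hsplit
  have hunique {v w x : V} (hw : M.Adj v w) (hx : M.Adj v x) : w = x :=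
    (hM.1 (hM.2 v)).unique hw hx
  let col (v : V) (e : Sym2 V) : ℤ :=
    if e ∈ M.edgeSet then 0 else if e = s(v, a v) then 1 else -1
  let σ : Sym2 V → ℤ := Sym2.lift
    ⟨fun v w ↦ if s(v, w) ∈ M.edgeSet then 1 else -(col v s(v, w) * col w s(v, w)),
      fun v w ↦ by simp only [Sym2.eq_swap (a := w), mul_comm]⟩
  refine ⟨σ, ?_, ⟨col, ?_, ?_⟩, ?_⟩
  · rintro ⟨v, w⟩ -
    simp only [σ, col, Sym2.lift_mk]
    split_ifs <;> simp
  · intro v w _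
    simp only [Mset, col, Set.mem_ofPred_eq]
    split_ifs <;> decide
  · intro v w _
    simp only [σ, col, Sym2.lift_mk]
    split_ifs <;> simp
  · intro v w x hw hx hwx
    have := ha v w x hw hx
    have := hunique (v := v) (w := w) (x := x)
    simp only [col, Subgraph.mem_edgeSet, Sym2.congr_right]
    split_ifs <;> simp_all

/-- Every finite connected isthmus-free `3`-regular simple graph carries some signature
for which the resulting signed graph is properly `3`-edge colorable. -/
theorem exists_signature_three_colorable {V : Type*} [Fintype V] (G : SimpleGraph V)
    [DecidableRel G.Adj] (hconn : G.Connected) (hreg : ∀ v : V, G.degree v = 3)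
    (hbridge : ∀ e ∈ G.edgeSet, ¬G.IsBridge e) :
    ∃ σ : Sym2 V → ℤ, (∀ e ∈ G.edgeSet, σ e = 1 ∨ σ e = -1) ∧
      ∃ c : SColoring G σ 3, c.Proper := by
  obtain ⟨M, hM⟩ := exists_isPerfectMatching_of_cubic hreg hbridge
  exact hM.exists_signature_coloring hreg
end
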